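/- arXiv:2310.08816 — 2 statements merged into one kernel-verified Lean document; each statement's English description precedes it below -/
import Mathlib

section
/- Let X₀ = {V ∈ X : E(q,V) = 0 for all q ∈ H̃^{1/2}(Γ)}. Then X₀, with the norm of X, is compactly embedded in H; that is, every bounded sequence in X₀ has a subsequence converging in H. -/
noncomputable section

open MeasureTheory Complex Filter Topology
open scoped Real NNReal ContDiff

/-- The plane `ℝ²`. -/
abbrev R2 : Type := EuclideanSpace ℝ (Fin 2)

/-- Euclidean dot product on `ℝ²`. -/
def rdot (x ξ : R2) : ℝ := x 0 * ξ 0 + x 1 * ξ 1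

/-- `testFT φ ξ = ∫ e^{i x·ξ} φ(x) dx`, the (inverse-type) Fourier integral of a
test function `φ`. -/
def testFT (φ : R2 → ℂ) (ξ : R2) : ℂ :=
  ∫ x : R2, Complex.exp (Complex.I * (rdot x ξ : ℂ)) * φ x

/-- The squared `H^s(ℝ²)` norm of the distribution whose Fourier transform is `F`:
`‖f‖² = (2π)⁻² ∫ (1+|ξ|²)^s |f̂(ξ)|² dξ`. -/
def wnormSq (s : ℝ) (F : R2 → ℂ) : ℝ :=
  ((2 * π) ^ 2)⁻¹ * ∫ ξ : R2, ((1 : ℝ) + ‖ξ‖ ^ 2) ^ s * ‖F ξ‖ ^ 2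

/-- The `H^s(ℝ²)` norm (Fourier-side representation). -/
def wnorm (s : ℝ) (F : R2 → ℂ) : ℝ := Real.sqrt (wnormSq s F)

/-- `F` is the Fourier transform of an element of `H^s(ℝ²)`. -/
def MemHs (s : ℝ) (F : R2 → ℂ) : Prop :=
  AEStronglyMeasurable F (volume : Measure R2) ∧
    Integrable (fun ξ : R2 => ((1 : ℝ) + ‖ξ‖ ^ 2) ^ s * ‖F ξ‖ ^ 2) volume

/-- An element `f` of `H̃^s(Γ)`: a distribution on `ℝ²` of Sobolev regularity `s`
supported in the closure of `Γ`, represented by its Fourier transform `ft`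
(a continuous function, `f` being a compactly supported distribution).
The support condition is expressed by testing against smooth compactly supported
functions `φ` whose support avoids `closure Γ`, via the Parseval pairing
`∫ f φ dx = (2π)⁻² ∫ f̂(ξ) φ̌(ξ) dξ` with `φ̌(ξ) = ∫ e^{ix·ξ} φ(x) dx`. -/
structure HTildeElt (s : ℝ) (Γ : Set R2) where
  ft : R2 → ℂ
  cont : Continuous ft
  mem : Integrable (fun ξ : R2 => ((1 : ℝ) + ‖ξ‖ ^ 2) ^ s * ‖ft ξ‖ ^ 2) volume
  supp : ∀ φ : R2 → ℂ, ContDiff ℝ ∞ φ → HasCompactSupport φ →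
    tsupport φ ∩ closure Γ = ∅ → (∫ ξ : R2, ft ξ * testFT φ ξ) = 0

/-- `Γ` is a bounded Lipschitz domain in `ℝ²`: a nonempty bounded open set whose
boundary is locally, after a rigid motion, the graph of a Lipschitz function with
the domain on one side. -/
def IsLipschitzDomain (Γ : Set R2) : Prop :=
  IsOpen Γ ∧ Bornology.IsBounded Γ ∧ Γ.Nonempty ∧
    ∀ x ∈ frontier Γ, ∃ (e : R2 ≃ₗᵢ[ℝ] R2) (L : ℝ≥0) (f : ℝ → ℝ) (U : Set R2),
      LipschitzWith L f ∧ IsOpen U ∧ x ∈ U ∧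
        ∀ y ∈ U, (y ∈ Γ ↔ f (e y 0) < e y 1)

/-- `ξ·V̂(ξ)`, i.e. `-i` times the Fourier transform of `div V`. -/
def dotFt (F1 F2 : R2 → ℂ) (ξ : R2) : ℂ := (ξ 0 : ℂ) * F1 ξ + (ξ 1 : ℂ) * F2 ξ

/-- `ξ⊥·V̂(ξ)`, i.e. `-i` times the Fourier transform of `curl V`. -/
def curlFt (F1 F2 : R2 → ℂ) (ξ : R2) : ℂ := (ξ 1 : ℂ) * F1 ξ - (ξ 0 : ℂ) * F2 ξ

/-- An element of `X = H̃^{-1/2}_div(Γ)`: a pair of elements of `H̃^{-1/2}(Γ)`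
whose distributional divergence also belongs to `H̃^{-1/2}(Γ)`. -/
structure Xelt (Γ : Set R2) where
  c1 : HTildeElt (-(1/2) : ℝ) Γ
  c2 : HTildeElt (-(1/2) : ℝ) Γ
  divMem : Integrable (fun ξ : R2 =>
    ((1 : ℝ) + ‖ξ‖ ^ 2) ^ (-(1/2) : ℝ) * ‖dotFt c1.ft c2.ft ξ‖ ^ 2) volume

/-- The Fourier transform of `div V`. -/
def divFt {Γ : Set R2} (V : Xelt Γ) (ξ : R2) : ℂ :=
  Complex.I * dotFt V.c1.ft V.c2.ft ξ

/-- The squared `H`-norm `‖V‖²_H` of a vector field. -/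
def HnormSq {Γ : Set R2} (V : Xelt Γ) : ℝ :=
  wnormSq (-(1/2)) V.c1.ft + wnormSq (-(1/2)) V.c2.ft

/-- The squared `X`-norm `‖V‖²_X = ‖V‖²_H + ‖div V‖²_{H̃^{-1/2}}`. -/
def XnormSq {Γ : Set R2} (V : Xelt Γ) : ℝ :=
  HnormSq V + wnormSq (-(1/2)) (divFt V)

/-- The `X`-norm. -/
def Xnorm {Γ : Set R2} (V : Xelt Γ) : ℝ := Real.sqrt (XnormSq V)

/-- `ĝ₀(ξ) = i/√(k²-|ξ|²)`, with the branch `√(k²-|ξ|²) = i√(|ξ|²-k²)` for `|ξ| > k`. -/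
def g0hat (k : ℝ) (ξ : R2) : ℂ :=
  if ‖ξ‖ < k then Complex.I / ((Real.sqrt (k ^ 2 - ‖ξ‖ ^ 2) : ℝ) : ℂ)
  else 1 / ((Real.sqrt (‖ξ‖ ^ 2 - k ^ 2) : ℝ) : ℂ)

/-- The integrand of the sesquilinear form `B`:
`ĝ₀(ξ) [ (|ξ|²-k²) a₁ b̄₁ - k² a₂ b̄₂ ]` with `a₁ = ξ·Ŵ/|ξ|`, `a₂ = ξ⊥·Ŵ/|ξ|`, etc. -/
def Bintegrand (k : ℝ) (F1 F2 G1 G2 : R2 → ℂ) (ξ : R2) : ℂ :=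
  g0hat k ξ *
    (((‖ξ‖ ^ 2 - k ^ 2 : ℝ) : ℂ) * (dotFt F1 F2 ξ * starRingEnd ℂ (dotFt G1 G2 ξ)) -
      ((k ^ 2 : ℝ) : ℂ) * (curlFt F1 F2 ξ * starRingEnd ℂ (curlFt G1 G2 ξ))) /
    ((‖ξ‖ ^ 2 : ℝ) : ℂ)

/-- The sesquilinear form `B(W,V)`. -/
def Bform (k : ℝ) {Γ : Set R2} (W V : Xelt Γ) : ℂ :=
  ∫ ξ : R2, Bintegrand k W.c1.ft W.c2.ft V.c1.ft V.c2.ft ξ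

/-- The sesquilinear form `E(q,V) = B(curl⃗ q, V)`, where
`curl⃗ q = (∂q/∂x₂, -∂q/∂x₁)` has Fourier transform `(iξ₂ q̂, -iξ₁ q̂)`. -/
def Eform (k : ℝ) {Γ : Set R2} (q : HTildeElt (1/2 : ℝ) Γ) (V : Xelt Γ) : ℂ :=
  ∫ ξ : R2, Bintegrand k (fun η => Complex.I * (η 1 : ℂ) * q.ft η)
      (fun η => -(Complex.I * (η 0 : ℂ) * q.ft η)) V.c1.ft V.c2.ft ξ

/-- The inner product of the Hilbert space `X`; by the Riesz representation
theorem, every bounded conjugate-linear functional on `X` is `V ↦ Xinner Y V`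
for a unique `Y ∈ X`, with functional norm `Xnorm Y`. -/
def Xinner {Γ : Set R2} (Y V : Xelt Γ) : ℂ :=
  ((((2 * π) ^ 2)⁻¹ : ℝ) : ℂ) * ∫ ξ : R2, ((((1 : ℝ) + ‖ξ‖ ^ 2) ^ (-(1/2) : ℝ) : ℝ) : ℂ) *
    (Y.c1.ft ξ * starRingEnd ℂ (V.c1.ft ξ) + Y.c2.ft ξ * starRingEnd ℂ (V.c2.ft ξ) +
      divFt Y ξ * starRingEnd ℂ (divFt V ξ))

/-- `√(k²-|ξ|²)`, with the branch `i√(|ξ|²-k²)` for `|ξ| > k`. -/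
def rootk (k : ℝ) (ξ : R2) : ℂ :=
  if ‖ξ‖ < k then ((Real.sqrt (k ^ 2 - ‖ξ‖ ^ 2) : ℝ) : ℂ)
  else Complex.I * ((Real.sqrt (‖ξ‖ ^ 2 - k ^ 2) : ℝ) : ℂ)

/-- The Fourier multiplier `i/(2√(k²-|ξ|²))` of the Helmholtz single-layer
operator `T` with kernel `e^{ik|x-y|}/(4π|x-y|)`. -/
def mT (k : ℝ) (ξ : R2) : ℂ := Complex.I / (2 * rootk k ξ)

/-- The Fourier multiplier `1/(2|ξ|)` of the Laplace single-layer operator `T₀`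
with kernel `1/(4π|x-y|)`. -/
def mT0 (ξ : R2) : ℂ := 1 / (2 * ((‖ξ‖ : ℝ) : ℂ))

/-- The Fourier multiplier of `R = T - T₀`. -/
def mR (k : ℝ) (ξ : R2) : ℂ := mT k ξ - mT0 ξ

/-- The distributions with Fourier data `G` and `E` have the same restriction to
the open set `Γ`: `⟨G - E, φ⟩ = 0` for all smooth `φ` compactly supported in `Γ`
(pairing written on the Fourier side). -/
def AgreeOn (Γ : Set R2) (G E : R2 → ℂ) : Prop :=
  ∀ φ : R2 → ℂ, ContDiff ℝ ∞ φ → HasCompactSupport φ → tsupport φ ⊆ Γ →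
    (∫ ξ : R2, (G ξ - E ξ) * testFT φ ξ) = 0

/-- The duality pairing `⟨f, ψ⟩` between `H^{1/2}(Γ)` and `H̃^{-1/2}(Γ)`, written
on the Fourier side (Plancherel): `(2π)⁻² ∫ f̂(ξ) conj(ψ̂(ξ)) dξ`, where `G = f̂`
is the Fourier data of (an extension of) `f`. -/
def dualPair (G ψ : R2 → ℂ) : ℂ :=
  ((((2 * π) ^ 2)⁻¹ : ℝ) : ℂ) * ∫ ξ : R2, G ξ * starRingEnd ℂ (ψ ξ)

def IsTest (φ : R2 → ℂ) : Prop := ContDiff ℝ ∞ φ ∧ HasCompactSupport φ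

def Fast (G : R2 → ℂ) : Prop :=
  Continuous G ∧ ∀ N : ℕ, ∃ C : ℝ, 0 < C ∧ ∀ ξ, ‖G ξ‖ ≤ C * ((1 + ‖ξ‖) ^ N)⁻¹

lemma rdot_eq_inner (x ξ : R2) : rdot x ξ = inner ℝ x ξ := by
  simp [rdot, PiLp.inner_apply, Fin.sum_univ_two, mul_comm]

lemma IsTest.integrable {φ : R2 → ℂ} (h : IsTest φ) : Integrable φ :=
  h.1.continuous.integrable_of_hasCompactSupport h.2

lemma testFT_eq (φ : R2 → ℂ) (ξ : R2) :
    testFT φ ξ = FourierTransformInv.fourierInv φ ((2 * π)⁻¹ • ξ) := by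
  rw [Real.fourierInv_eq']
  unfold testFT
  congr 1
  ext x
  rw [smul_eq_mul, rdot_eq_inner, inner_smul_right, mul_inv_cancel_left₀ (by positivity), mul_comm I]

lemma testFT_fast {φ : R2 → ℂ} (h : IsTest φ) : Fast (testFT φ) := by
  set f := h.2.toSchwartzMap h.1 with hf
  have hφ : (f : R2 → ℂ) = φ := rfl
  set g := FourierTransformInv.fourierInv f with hg
  have key : ∀ ξ, testFT φ ξ = g ((2 * π)⁻¹ • ξ) := by
    intro ξ
    rw [testFT_eq, hg, SchwartzMap.fourierInv_coe]
    rfl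
  refine ⟨?_, fun N => ?_⟩
  · have : testFT φ = fun ξ => g ((2 * π)⁻¹ • ξ) := funext key
    rw [this]
    exact g.continuous.comp (continuous_const_smul _)
  · have h1 := fun x => SchwartzMap.one_add_le_sup_seminorm_apply (𝕜 := ℝ) (m := (N, 0)) (k := N) (n := 0) le_rfl le_rfl g x
    simp only [norm_iteratedFDeriv_zero] at h1
    set C := 2 ^ N * ((Finset.Iic (N, 0)).sup fun m ↦ SchwartzMap.seminorm ℝ m.1 m.2) g with hC
    refine ⟨(2 * π) ^ N * (|C| + 1), by positivity, fun ξ => ?_⟩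
    have h2 := h1 ((2 * π)⁻¹ • ξ)
    rw [← key] at h2
    have hpi : (1 : ℝ) ≤ 2 * π := by have := Real.pi_gt_three; linarith
    have h3 : (1 + ‖ξ‖) ≤ (2 * π) * (1 + ‖(2 * π)⁻¹ • ξ‖) := by
      rw [norm_smul, Real.norm_of_nonneg (by positivity), mul_add, mul_inv_cancel_left₀ (by positivity)]
      linarith
    have h4 : (1 + ‖ξ‖) ^ N ≤ (2 * π) ^ N * (1 + ‖(2 * π)⁻¹ • ξ‖) ^ N := by
      rw [← mul_pow]; gcongr
    rw [← div_eq_mul_inv, le_div_iff₀ (by positivity)]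
    calc ‖testFT φ ξ‖ * (1 + ‖ξ‖) ^ N
        ≤ ‖testFT φ ξ‖ * ((2 * π) ^ N * (1 + ‖(2 * π)⁻¹ • ξ‖) ^ N) := by gcongr
      _ = (2 * π) ^ N * ((1 + ‖(2 * π)⁻¹ • ξ‖) ^ N * ‖testFT φ ξ‖) := by ring
      _ ≤ (2 * π) ^ N * (|C| + 1) := by
          gcongr
          exact h2.trans ((le_abs_self _).trans (by linarith))

lemma integrable_decay : Integrable (fun ξ : R2 => ((1 + ‖ξ‖) ^ 3)⁻¹) := by
  have := integrable_one_add_norm (E := R2) (μ := volume) (r := 3) (by simp; norm_num)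
  refine this.congr (Eventually.of_forall fun ξ => ?_)
  simp only
  rw [Real.rpow_neg (by positivity)]
  norm_cast

lemma integrable_decay' {N : ℕ} (hN : 3 ≤ N) : Integrable (fun ξ : R2 => ((1 + ‖ξ‖) ^ N)⁻¹) := by
  refine integrable_decay.mono' (by fun_prop) (Eventually.of_forall fun ξ => ?_)
  rw [Real.norm_of_nonneg (by positivity)]
  gcongr
  · linarith [norm_nonneg ξ]

lemma Fast.integrable {G : R2 → ℂ} (h : Fast G) : Integrable G := by
  obtain ⟨C, hC, hb⟩ := h.2 3
  exact (integrable_decay.const_mul C).mono' h.1.aestronglyMeasurable (Eventually.of_forall hb)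

lemma testFT_inversion {φ : R2 → ℂ} (h : IsTest φ) (x : R2) :
    ∫ ξ, Complex.exp (-(Complex.I * (rdot x ξ : ℂ))) * testFT φ ξ = ((2 * π) ^ 2 : ℝ) * φ x := by
  have h1 : Integrable (FourierTransformInv.fourierInv φ) := by
    have := (testFT_fast h).integrable
    have h2 := this.comp_smul (R := 2 * π) (by positivity)
    refine h2.congr (Eventually.of_forall fun ξ => ?_)
    simp only [testFT_eq]
    rw [inv_smul_smul₀ (by positivity)]
  have h2 : Integrable (FourierTransform.fourier φ) := by
    have := h1.comp_neg
    refine this.congr (Eventually.of_forall fun ξ => ?_)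
    simp only [Real.fourierInv_eq_fourier_neg, neg_neg]
  have h3 := congrFun (h.1.continuous.fourier_fourierInv_eq h.integrable h2) x
  rw [← h3, Real.fourier_eq']
  have h4 := Measure.integral_comp_smul (volume : Measure R2)
    (fun ξ => Complex.exp (-(Complex.I * (rdot x ξ : ℂ))) * testFT φ ξ) (2 * π)
  have h5 : |(((2 * π) ^ (Module.finrank ℝ R2))⁻¹ : ℝ)| = ((2 * π) ^ 2)⁻¹ := by
    rw [abs_of_nonneg (by positivity)]; simp
  rw [h5] at h4
  have h6 : (∫ v, Complex.exp (↑(-2 * π * inner ℝ v x) * I) • FourierTransformInv.fourierInv φ v)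
      = ∫ v : R2, Complex.exp (-(Complex.I * (rdot x ((2 * π) • v) : ℂ))) * testFT φ ((2 * π) • v) := by
    congr 1
    ext v
    rw [testFT_eq, inv_smul_smul₀ (by positivity), rdot_eq_inner, inner_smul_right, smul_eq_mul,
      real_inner_comm]
    congr 2
    push_cast
    ring
  rw [h6, h4]
  simp only [real_smul]
  rw [← mul_assoc, ← ofReal_mul, mul_inv_cancel₀ (by positivity)]
  simp

lemma rdot_continuous : Continuous (fun p : R2 × R2 => rdot p.1 p.2) := by
  unfold rdot; fun_prop

lemma norm_cexp_I_rdot (x : ℝ) : ‖Complex.exp (Complex.I * (x : ℂ))‖ = 1 := by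
  rw [mul_comm]; exact Complex.norm_exp_ofReal_mul_I x

lemma norm_cexp_neg_I_rdot (x : ℝ) : ‖Complex.exp (-(Complex.I * (x : ℂ)))‖ = 1 := by
  have := norm_cexp_I_rdot (-x)
  simpa using this

lemma rdot_contDiff (ξ : R2) : ContDiff ℝ ∞ (fun x : R2 => rdot x ξ) := by
  unfold rdot; fun_prop

lemma rdot_add_left (x y ξ : R2) : rdot (x + y) ξ = rdot x ξ + rdot y ξ := by
  simp [rdot]; ring
lemma rdot_sub_left (x y ξ : R2) : rdot (x - y) ξ = rdot x ξ - rdot y ξ := by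
  simp [rdot]; ring
lemma rdot_sub_right (x y ξ : R2) : rdot x (y - ξ) = rdot x y - rdot x ξ := by
  simp [rdot]; ring
lemma rdot_neg_right (x ξ : R2) : rdot x (-ξ) = - rdot x ξ := by
  simp [rdot]; ring
lemma rdot_smul_left (t : ℝ) (x ξ : R2) : rdot (t • x) ξ = t * rdot x ξ := by
  simp [rdot]; ring
lemma rdot_smul_right (t : ℝ) (x ξ : R2) : rdot x (t • ξ) = t * rdot x ξ := by
  simp [rdot]; ring

/-- translation: testFT (φ(·+a)) -/
lemma testFT_translate (φ : R2 → ℂ) (a ξ : R2) :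
    testFT (fun x => φ (x + a)) ξ = Complex.exp (-(Complex.I * (rdot a ξ : ℂ))) * testFT φ ξ := by
  unfold testFT
  rw [← integral_const_mul]
  rw [← integral_add_right_eq_self _ a]
  rw [← integral_add_right_eq_self (fun x => cexp (-(I * ↑(rdot a ξ))) * (cexp (I * ↑(rdot x ξ)) * φ x)) (a + a)]
  congr 1
  ext x
  rw [← add_assoc, ← mul_assoc, ← Complex.exp_add]
  congr 2
  simp only [rdot_add_left]; push_cast; ring

lemma IsTest.translate {φ : R2 → ℂ} (h : IsTest φ) (a : R2) : IsTest (fun x => φ (x + a)) :=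
  ⟨h.1.comp (by fun_prop), h.2.comp_homeomorph (Homeomorph.addRight a)⟩

lemma IsTest.modulate {φ : R2 → ℂ} (h : IsTest φ) (ξ : R2) :
    IsTest (fun x => Complex.exp (-(Complex.I * (rdot x ξ : ℂ))) * φ x) := by
  refine ⟨?_, h.2.mul_left⟩
  have : ContDiff ℝ ∞ (fun x : R2 => ((rdot x ξ : ℝ) : ℂ)) := ofRealCLM.contDiff.comp (rdot_contDiff ξ)
  exact ContDiff.mul (by fun_prop) h.1

lemma IsTest.mul {φ ψ : R2 → ℂ} (h : IsTest φ) (h' : IsTest ψ) :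
    IsTest (fun x => φ x * ψ x) := ⟨h.1.mul h'.1, h'.2.mul_left⟩

lemma testFT_mul {χ φ : R2 → ℂ} (hχ : IsTest χ) (hφ : IsTest φ) (η : R2) :
    testFT (fun x => χ x * φ x) η
      = (((2 * π) ^ 2)⁻¹ : ℝ) * ∫ ξ, testFT χ (η - ξ) * testFT φ ξ := by
  have h1 : ∫ ξ, testFT χ (η - ξ) * testFT φ ξ
      = ∫ ξ, ∫ x, Complex.exp (I * (rdot x (η - ξ) : ℂ)) * χ x * testFT φ ξ := by
    congr 1; ext ξ
    rw [integral_mul_const]; rfl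
  rw [h1, integral_integral_swap]
  · have h2 : ∀ x, ∫ ξ, Complex.exp (I * (rdot x (η - ξ) : ℂ)) * χ x * testFT φ ξ
        = Complex.exp (I * (rdot x η : ℂ)) * χ x * (((2 * π) ^ 2 : ℝ) * φ x) := by
      intro x
      rw [← testFT_inversion hφ x, ← integral_const_mul]
      congr 1; ext ξ
      rw [rdot_sub_right]
      push_cast
      rw [mul_sub, sub_eq_add_neg, Complex.exp_add]
      ring
    simp_rw [h2]
    unfold testFT
    rw [← integral_const_mul]
    congr 1; ext x
    have : (((2 * π) ^ 2)⁻¹ : ℝ) * (((2 * π) ^ 2 : ℝ) : ℂ) = 1 := by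
      rw [← ofReal_mul, inv_mul_cancel₀ (by positivity)]; simp
    linear_combination (-(cexp (I * ↑(rdot x η)) * χ x * φ x)) * this
  · have h3 : Integrable (fun p : R2 × R2 => testFT φ p.1 * χ p.2) (volume.prod volume) :=
      (testFT_fast hφ).integrable.mul_prod hχ.integrable
    refine h3.norm.mono' ?_ (Eventually.of_forall fun p => ?_)
    · apply Continuous.aestronglyMeasurable
      have := (testFT_fast hφ).1
      have := hχ.1.continuous
      have : Continuous (fun p : R2 × R2 => rdot p.2 (η - p.1)) :=
        rdot_continuous.comp (by fun_prop : Continuous fun p : R2 × R2 => (p.2, η - p.1))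
      simp only [Function.uncurry_def]
      fun_prop
    · simp only [Function.uncurry_def, norm_mul, norm_cexp_I_rdot]
      apply le_of_eq; ring

/-- A continuous function annihilating all `testFT φ` vanishes. -/
lemma zero_of_annihilate {D : R2 → ℂ} (hD : Continuous D)
    (hi : ∀ φ, IsTest φ → Integrable (fun ξ => D ξ * testFT φ ξ))
    (h0 : ∀ φ, IsTest φ → ∫ ξ, D ξ * testFT φ ξ = 0) : D = 0 := by
  have h1 : ∀ φ, IsTest φ → ∀ ξ, D ξ * testFT φ ξ = 0 := by
    intro φ hφ
    have hz : FourierTransform.fourier (fun ξ => D ξ * testFT φ ξ) = 0 := by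
      ext w
      rw [Real.fourier_eq']
      have h2 := h0 _ (hφ.translate ((2 * π) • w))
      rw [Pi.zero_apply, ← h2]
      congr 1; ext ξ
      rw [testFT_translate, smul_eq_mul, rdot_smul_left, rdot_eq_inner, real_inner_comm]
      have : cexp (↑(-2 * π * inner ℝ w ξ) * I) = cexp (-(I * ↑(2 * π * inner ℝ w ξ))) := by
        congr 1; push_cast; ring
      rw [this]; ring
    have h3 := Continuous.fourierInv_fourier_eq (hD.mul (testFT_fast hφ).1) (hi φ hφ) (by
      show Integrable (FourierTransform.fourier (fun ξ => D ξ * testFT φ ξ))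
      rw [hz]; exact integrable_zero _ _ _)
    intro ξ
    have h4 := congrFun h3 ξ
    change _ = D ξ * testFT φ ξ at h4
    rw [← h4, show FourierTransform.fourier (D * testFT φ) = 0 from hz]
    rw [Real.fourierInv_eq']
    simp
  ext ξ
  let b : ContDiffBump (0 : R2) := ⟨1, 2, by norm_num, by norm_num⟩
  have hb : IsTest (fun x => ((b x : ℝ) : ℂ)) := by
    refine ⟨ofRealCLM.contDiff.comp b.contDiff, ?_⟩
    exact b.hasCompactSupport.comp_left (g := fun x : ℝ => (x : ℂ)) (by simp)
  have h5 := h1 _ (hb.modulate ξ) ξ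
  have h6 : testFT (fun x => cexp (-(I * ↑(rdot x ξ))) * ((b x : ℝ) : ℂ)) ξ = ((∫ x, b x : ℝ) : ℂ) := by
    unfold testFT
    rw [← integral_complex_ofReal]
    congr 1; ext x
    rw [← mul_assoc, ← Complex.exp_add]; simp
  rw [h6] at h5
  have h7 : (0 : ℝ) < ∫ x, b x := b.integral_pos
  rcases mul_eq_zero.1 h5 with h | h
  · exact h
  · exact absurd (ofReal_eq_zero.1 h) h7.ne'

/-- The weight `(1+|ξ|²)^{-1/2}`. -/
def wm (ξ : R2) : ℝ := ((1 : ℝ) + ‖ξ‖ ^ 2) ^ (-(1/2) : ℝ)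

lemma wm_eq (ξ : R2) : wm ξ = (Real.sqrt (1 + ‖ξ‖ ^ 2))⁻¹ := by
  unfold wm
  rw [Real.rpow_neg (by positivity), Real.sqrt_eq_rpow]

lemma wm_pos (ξ : R2) : 0 < wm ξ := by unfold wm; positivity

lemma wm_continuous : Continuous wm := by
  unfold wm
  refine Continuous.rpow_const (by fun_prop) (fun ξ => Or.inl (by positivity))

lemma sqrt_le_one_add (ξ : R2) : Real.sqrt (1 + ‖ξ‖ ^ 2) ≤ 1 + ‖ξ‖ := by
  rw [Real.sqrt_le_left (by positivity)]
  nlinarith [norm_nonneg ξ]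

lemma one_add_le_sqrt (ξ : R2) : 1 + ‖ξ‖ ≤ 2 * Real.sqrt (1 + ‖ξ‖ ^ 2) := by
  have h1 : 1 ≤ Real.sqrt (1 + ‖ξ‖ ^ 2) := by
    rw [Real.one_le_sqrt]; nlinarith [norm_nonneg ξ]
  have h2 : ‖ξ‖ ≤ Real.sqrt (1 + ‖ξ‖ ^ 2) := by
    apply Real.le_sqrt_of_sq_le; linarith
  linarith

lemma inv_le_wm (ξ : R2) : (1 + ‖ξ‖)⁻¹ ≤ wm ξ := by
  rw [wm_eq]
  have : 0 < Real.sqrt (1 + ‖ξ‖ ^ 2) := by positivity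
  gcongr
  exact sqrt_le_one_add ξ

lemma wm_le_inv (ξ : R2) : wm ξ ≤ 2 * (1 + ‖ξ‖)⁻¹ := by
  rw [wm_eq]
  have : 0 < Real.sqrt (1 + ‖ξ‖ ^ 2) := by positivity
  rw [← div_eq_mul_inv, le_div_iff₀ (by positivity), inv_mul_le_iff₀ this]
  linarith [one_add_le_sqrt ξ]

lemma wm_le_one (ξ : R2) : wm ξ ≤ 1 := by
  rw [wm_eq]
  apply inv_le_one_of_one_le₀
  rw [Real.one_le_sqrt]; nlinarith [norm_nonneg ξ]

lemma peetre0 (ξ η : R2) : 1 + ‖η‖ ≤ (1 + ‖ξ‖) * (1 + ‖ξ - η‖) := by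
  have : ‖η‖ ≤ ‖ξ‖ + ‖ξ - η‖ := by
    have := norm_sub_le ξ (ξ - η); simpa using this
  nlinarith [norm_nonneg ξ, norm_nonneg (ξ - η), mul_nonneg (norm_nonneg ξ) (norm_nonneg (ξ - η))]

lemma peetre1 (ξ η : R2) : 1 + ‖ξ‖ ≤ (1 + ‖η‖) * (1 + ‖ξ - η‖) := by
  have := peetre0 η ξ
  rwa [norm_sub_rev] at this

lemma peetre (ξ η : R2) : wm ξ ≤ 2 * (1 + ‖ξ - η‖) * wm η := by
  refine (wm_le_inv ξ).trans ?_
  have h1 := inv_le_wm η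
  have h2 := peetre0 ξ η
  have h3 : (1 + ‖ξ‖)⁻¹ ≤ (1 + ‖ξ - η‖) * (1 + ‖η‖)⁻¹ := by
    rw [inv_le_iff_one_le_mul₀ (by positivity)]
    rw [mul_comm, ← mul_assoc, ← div_eq_mul_inv, le_div_iff₀ (by positivity)]
    linarith
  calc 2 * (1 + ‖ξ‖)⁻¹ ≤ 2 * ((1 + ‖ξ - η‖) * (1 + ‖η‖)⁻¹) := by gcongr
    _ ≤ 2 * ((1 + ‖ξ - η‖) * wm η) := by gcongr
    _ = _ := by ring

def WL2 (F : R2 → ℂ) : Prop := Continuous F ∧ Integrable (fun ξ => wm ξ * ‖F ξ‖ ^ 2)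

def Nf (F : R2 → ℂ) : ℝ := ∫ ξ, wm ξ * ‖F ξ‖ ^ 2

def cv (G F : R2 → ℂ) (ξ : R2) : ℂ := ∫ η, G (ξ - η) * F η

lemma Nf_nonneg (F : R2 → ℂ) : 0 ≤ Nf F :=
  integral_nonneg fun ξ => mul_nonneg (wm_pos ξ).le (sq_nonneg _)

lemma amgm (a b t : ℝ) (η : R2) (ht : 0 < t) :
    a * b ≤ t⁻¹ * (a ^ 2 * (1 + ‖η‖)) + t * (wm η * b ^ 2) := by
  have h1 : (1 + ‖η‖)⁻¹ * b ^ 2 ≤ wm η * b ^ 2 := by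
    gcongr; exact inv_le_wm η
  have h2 : a * b ≤ t⁻¹ * (a ^ 2 * (1 + ‖η‖)) + t * ((1 + ‖η‖)⁻¹ * b ^ 2) := by
    have hp : 0 < 1 + ‖η‖ := by positivity
    set p := 1 + ‖η‖
    have : t⁻¹ * (a ^ 2 * p) + t * (p⁻¹ * b ^ 2) - a * b
        = t⁻¹ * p⁻¹ * ((a * p) ^ 2 + (t * b) ^ 2 - (a * p) * (t * b)) := by
      field_simp
    have h3 : 0 ≤ (a * p) ^ 2 + (t * b) ^ 2 - (a * p) * (t * b) := by
      nlinarith [sq_nonneg (a * p - t * b), sq_nonneg (a * p), sq_nonneg (t * b)]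
    have h4 : 0 ≤ t⁻¹ * p⁻¹ * ((a * p) ^ 2 + (t * b) ^ 2 - (a * p) * (t * b)) := by positivity
    linarith
  have : t * ((1 + ‖η‖)⁻¹ * b ^ 2) ≤ t * (wm η * b ^ 2) := by gcongr
  linarith

lemma Fast.bound_sq {G : R2 → ℂ} (h : Fast G) : ∃ C : ℝ, 0 < C ∧ ∀ ξ η,
    ‖G (ξ - η)‖ ^ 2 * (1 + ‖η‖) ≤ C * (1 + ‖ξ‖) * ((1 + ‖ξ - η‖) ^ 3)⁻¹ := by
  obtain ⟨C, hC, hb⟩ := h.2 2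
  refine ⟨C ^ 2, by positivity, fun ξ η => ?_⟩
  have h1 := hb (ξ - η)
  have h2 := peetre0 ξ η
  have hp : 0 < 1 + ‖ξ - η‖ := by positivity
  set p := 1 + ‖ξ - η‖
  calc ‖G (ξ - η)‖ ^ 2 * (1 + ‖η‖) ≤ (C * (p ^ 2)⁻¹) ^ 2 * ((1 + ‖ξ‖) * p) := by gcongr
    _ = _ := by field_simp

lemma integrable_shift (ξ : R2) : Integrable (fun η : R2 => ((1 + ‖ξ - η‖) ^ 3)⁻¹) :=
  integrable_decay.comp_sub_left ξ

lemma Fast.integrable_sq {G : R2 → ℂ} (h : Fast G) (ξ : R2) :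
    Integrable (fun η => ‖G (ξ - η)‖ ^ 2 * (1 + ‖η‖)) := by
  obtain ⟨C, hC, hb⟩ := h.bound_sq
  refine ((integrable_shift ξ).const_mul (C * (1 + ‖ξ‖))).mono' ?_ (Eventually.of_forall fun η => ?_)
  · have := h.1
    exact Continuous.aestronglyMeasurable (by fun_prop)
  · rw [Real.norm_of_nonneg (by positivity)]
    exact hb ξ η

lemma cv_integrable {G F : R2 → ℂ} (h : Fast G) (hF : WL2 F) (ξ : R2) :
    Integrable (fun η => G (ξ - η) * F η) := by
  refine ((h.integrable_sq ξ).add hF.2).mono' ?_ (Eventually.of_forall fun η => ?_)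
  · have := h.1
    have := hF.1
    exact Continuous.aestronglyMeasurable (by fun_prop)
  · rw [norm_mul]
    have := amgm ‖G (ξ - η)‖ ‖F η‖ 1 η one_pos
    simpa using this

lemma cv_bound {G : R2 → ℂ} (h : Fast G) : ∃ C : ℝ, 0 < C ∧ ∀ F, WL2 F → ∀ ξ,
    ‖cv G F ξ‖ ≤ C * (1 + ‖ξ‖) + Nf F := by
  obtain ⟨C, hC, hb⟩ := h.bound_sq
  set J := ∫ η : R2, ((1 + ‖η‖) ^ 3)⁻¹
  have hJ : 0 ≤ J := integral_nonneg fun ξ => by positivity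
  refine ⟨C * (J + 1), by positivity, fun F hF ξ => ?_⟩
  have h1 : ‖cv G F ξ‖ ≤ ∫ η, (C * (1 + ‖ξ‖) * ((1 + ‖ξ - η‖) ^ 3)⁻¹ + wm η * ‖F η‖ ^ 2) := by
    refine norm_integral_le_of_norm_le (((integrable_shift ξ).const_mul _).add hF.2)
      (Eventually.of_forall fun η => ?_)
    rw [norm_mul]
    have := amgm ‖G (ξ - η)‖ ‖F η‖ 1 η one_pos
    have h2 := hb ξ η
    simp only [inv_one, one_mul] at this
    linarith
  rw [integral_add ((integrable_shift ξ).const_mul _) hF.2, integral_const_mul,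
    integral_sub_left_eq_self (fun η : R2 => ((1 + ‖η‖) ^ 3)⁻¹)] at h1
  refine h1.trans ?_
  show C * (1 + ‖ξ‖) * J + Nf F ≤ _
  nlinarith [mul_nonneg hC.le (norm_nonneg ξ)]

/-- modulus of continuity -/
lemma cv_equicont {G : R2 → ℂ} (h : Fast G) (ξ₀ : R2) : ∃ ρ : R2 → ℝ, Tendsto ρ (𝓝 ξ₀) (𝓝 0) ∧
    ∀ F, WL2 F → ∀ t, 0 < t → ∀ ξ, ‖cv G F ξ - cv G F ξ₀‖ ≤ t⁻¹ * ρ ξ + t * Nf F := by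
  refine ⟨fun ξ => ∫ η, ‖G (ξ - η) - G (ξ₀ - η)‖ ^ 2 * (1 + ‖η‖), ?_, ?_⟩
  · obtain ⟨C, hC, hb⟩ := h.bound_sq
    have hcont := h.1
    have key : ContinuousAt (fun ξ => ∫ η, ‖G (ξ - η) - G (ξ₀ - η)‖ ^ 2 * (1 + ‖η‖)) ξ₀ := by
      apply continuousAt_of_dominated
        (bound := fun η => 2 * (C * (2 + ‖ξ₀‖) * (8 * ((1 + ‖ξ₀ - η‖) ^ 3)⁻¹))
          + 2 * (C * (1 + ‖ξ₀‖) * ((1 + ‖ξ₀ - η‖) ^ 3)⁻¹))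
      · exact Eventually.of_forall fun ξ => Continuous.aestronglyMeasurable (by fun_prop)
      · filter_upwards [Metric.ball_mem_nhds ξ₀ one_pos] with ξ hξ
        refine Eventually.of_forall fun η => ?_
        rw [Metric.mem_ball, dist_eq_norm] at hξ
        rw [Real.norm_of_nonneg (by positivity)]
        have e1 := hb ξ η
        have e2 := hb ξ₀ η
        have e3 : ‖G (ξ - η) - G (ξ₀ - η)‖ ^ 2 ≤ 2 * ‖G (ξ - η)‖ ^ 2 + 2 * ‖G (ξ₀ - η)‖ ^ 2 := by
          have := norm_sub_le (G (ξ - η)) (G (ξ₀ - η))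
          have h0 := norm_nonneg (G (ξ - η) - G (ξ₀ - η))
          nlinarith [sq_nonneg (‖G (ξ - η)‖ - ‖G (ξ₀ - η)‖)]
        have e4 : ‖ξ‖ ≤ ‖ξ₀‖ + 1 := by
          have := norm_le_norm_add_norm_sub' ξ ξ₀; linarith
        have e5 : ((1 + ‖ξ - η‖) ^ 3)⁻¹ ≤ 8 * ((1 + ‖ξ₀ - η‖) ^ 3)⁻¹ := by
          have e6 : 1 + ‖ξ₀ - η‖ ≤ 2 * (1 + ‖ξ - η‖) := by
            have : ‖ξ₀ - η‖ ≤ ‖ξ - η‖ + ‖ξ - ξ₀‖ := by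
              have := norm_sub_le (ξ - η) (ξ - ξ₀); simpa using this
            nlinarith [norm_nonneg (ξ - η)]
          have e7 : (1 + ‖ξ₀ - η‖) ^ 3 ≤ 8 * (1 + ‖ξ - η‖) ^ 3 := by
            calc (1 + ‖ξ₀ - η‖) ^ 3 ≤ (2 * (1 + ‖ξ - η‖)) ^ 3 := by gcongr
              _ = _ := by ring
          rw [← div_eq_mul_inv, le_div_iff₀ (by positivity), inv_mul_le_iff₀ (by positivity)]
          linarith
        have e8 : C * (1 + ‖ξ‖) * ((1 + ‖ξ - η‖) ^ 3)⁻¹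
            ≤ C * (2 + ‖ξ₀‖) * (8 * ((1 + ‖ξ₀ - η‖) ^ 3)⁻¹) := by
          have : 1 + ‖ξ‖ ≤ 2 + ‖ξ₀‖ := by linarith
          gcongr
        calc _ ≤ (2 * ‖G (ξ - η)‖ ^ 2 + 2 * ‖G (ξ₀ - η)‖ ^ 2) * (1 + ‖η‖) := by gcongr
          _ = 2 * (‖G (ξ - η)‖ ^ 2 * (1 + ‖η‖)) + 2 * (‖G (ξ₀ - η)‖ ^ 2 * (1 + ‖η‖)) := by ring
          _ ≤ _ := by linarith
      · exact ((((integrable_shift ξ₀).const_mul _).const_mul _).const_mul _).add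
          (((integrable_shift ξ₀).const_mul _).const_mul _)
      · exact Eventually.of_forall fun η => by fun_prop
    have h2 := key.tendsto
    simpa using h2
  · intro F hF t ht ξ
    unfold cv
    rw [← integral_sub (cv_integrable h hF ξ) (cv_integrable h hF ξ₀)]
    have hcont := h.1
    have hi : Integrable (fun η => ‖G (ξ - η) - G (ξ₀ - η)‖ ^ 2 * (1 + ‖η‖)) := by
      refine (((h.integrable_sq ξ).const_mul 2).add ((h.integrable_sq ξ₀).const_mul 2)).mono'
        (Continuous.aestronglyMeasurable (by fun_prop)) (Eventually.of_forall fun η => ?_)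
      rw [Real.norm_of_nonneg (by positivity)]
      have e3 : ‖G (ξ - η) - G (ξ₀ - η)‖ ^ 2 ≤ 2 * ‖G (ξ - η)‖ ^ 2 + 2 * ‖G (ξ₀ - η)‖ ^ 2 := by
        have := norm_sub_le (G (ξ - η)) (G (ξ₀ - η))
        have h0 := norm_nonneg (G (ξ - η) - G (ξ₀ - η))
        nlinarith [sq_nonneg (‖G (ξ - η)‖ - ‖G (ξ₀ - η)‖)]
      simp only [Pi.add_apply]
      calc _ ≤ (2 * ‖G (ξ - η)‖ ^ 2 + 2 * ‖G (ξ₀ - η)‖ ^ 2) * (1 + ‖η‖) := by gcongr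
        _ = _ := by ring
    have h1 : ‖∫ η, (G (ξ - η) * F η - G (ξ₀ - η) * F η)‖ ≤
        ∫ η, (t⁻¹ * (‖G (ξ - η) - G (ξ₀ - η)‖ ^ 2 * (1 + ‖η‖)) + t * (wm η * ‖F η‖ ^ 2)) := by
      refine norm_integral_le_of_norm_le ((hi.const_mul _).add (hF.2.const_mul _))
        (Eventually.of_forall fun η => ?_)
      rw [← sub_mul, norm_mul]
      exact amgm _ _ t η ht
    rw [integral_add (hi.const_mul _) (hF.2.const_mul _), integral_const_mul,
      integral_const_mul] at h1
    exact h1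

lemma equicont_est {ι : Type*} {u : ι → R2 → ℂ} {ξ₀ : R2} {ρ : R2 → ℝ} {N : ℝ}
    (hρ : Tendsto ρ (𝓝 ξ₀) (𝓝 0))
    (h : ∀ i, ∀ t, 0 < t → ∀ ξ, ‖u i ξ - u i ξ₀‖ ≤ t⁻¹ * ρ ξ + t * N) :
    EquicontinuousAt u ξ₀ := by
  rw [Metric.equicontinuousAt_iff_right]
  intro ε hε
  set t := ε / (2 * (|N| + 1)) with ht
  have htp : 0 < t := by positivity
  have h1 : ∀ᶠ ξ in 𝓝 ξ₀, ρ ξ < t * (ε / 2) := hρ.eventually (gt_mem_nhds (by positivity))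
  filter_upwards [h1] with ξ hξ i
  rw [dist_comm, dist_eq_norm]
  refine (h i t htp ξ).trans_lt ?_
  have h2 : t * N ≤ ε / 2 := by
    have : t * N ≤ t * (|N| + 1) := by
      gcongr; linarith [le_abs_self N]
    refine this.trans (le_of_eq ?_)
    rw [ht]; field_simp
  have h3 : t⁻¹ * ρ ξ < ε / 2 := by
    rw [inv_mul_lt_iff₀ htp]; exact hξ
  linarith

lemma cv_continuous {G F : R2 → ℂ} (h : Fast G) (hF : WL2 F) : Continuous (cv G F) := by
  rw [continuous_iff_continuousAt]
  intro ξ₀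
  obtain ⟨ρ, hρ, hb⟩ := cv_equicont h ξ₀
  have := equicont_est (ι := Unit) (u := fun _ => cv G F) hρ (fun _ t ht ξ => hb F hF t ht ξ)
  exact this.continuousAt ()

/-- weighted Cauchy–Schwarz -/
lemma cs_integral {g f : R2 → ℝ} (hg0 : ∀ x, 0 ≤ g x)
    (hg : Integrable g) (hgf : Integrable (fun x => g x * f x))
    (hgf2 : Integrable (fun x => g x * f x ^ 2)) :
    (∫ x, g x * f x) ^ 2 ≤ (∫ x, g x) * ∫ x, g x * f x ^ 2 := by
  have h : ∀ t : ℝ, 0 ≤ (∫ x, g x) * (t * t) + (-2 * ∫ x, g x * f x) * t + ∫ x, g x * f x ^ 2 := by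
    intro t
    have h1 : 0 ≤ ∫ x, (g x * (t * t) + (-2 * (g x * f x)) * t + g x * f x ^ 2) := by
      refine integral_nonneg fun x => ?_
      have : g x * (t * t) + (-2 * (g x * f x)) * t + g x * f x ^ 2 = g x * (f x - t) ^ 2 := by ring
      simp only [Pi.zero_apply]
      rw [this]
      exact mul_nonneg (hg0 x) (sq_nonneg _)
    have i0 : Integrable (fun x => g x * (t * t) + (-2 * (g x * f x)) * t) :=
      (hg.mul_const _).add ((hgf.const_mul _).mul_const _)
    rw [integral_add i0 hgf2, integral_add (hg.mul_const _) ((hgf.const_mul _).mul_const _), integral_mul_const,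
      integral_mul_const, integral_const_mul] at h1
    exact h1
  have := discrim_le_zero h
  unfold discrim at this
  nlinarith

lemma cv_WL2 {G : R2 → ℂ} (h : Fast G) : ∃ C : ℝ, 0 < C ∧ ∀ F, WL2 F →
    WL2 (cv G F) ∧ Nf (cv G F) ≤ C * Nf F := by
  obtain ⟨C₁, hC₁, hb₁⟩ := h.2 1
  obtain ⟨C₄, hC₄, hb₄⟩ := h.2 4
  have hcont := h.1
  set hh : R2 → ℝ := fun ξ => 2 * (1 + ‖ξ‖) * ‖G ξ‖ with hhd
  have hh0 : ∀ ξ, 0 ≤ hh ξ := fun ξ => by positivity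
  have hhi : Integrable hh := by
    refine (integrable_decay.const_mul (2 * C₄)).mono'
      (Continuous.aestronglyMeasurable (by fun_prop)) (Eventually.of_forall fun ξ => ?_)
    rw [Real.norm_of_nonneg (hh0 ξ)]
    have hp : 0 < 1 + ‖ξ‖ := by positivity
    have := hb₄ ξ
    simp only [hhd]
    set p := 1 + ‖ξ‖
    calc 2 * p * ‖G ξ‖ ≤ 2 * p * (C₄ * (p ^ 4)⁻¹) := by gcongr
      _ = _ := by field_simp
  set g1 := ∫ ξ, ‖G ξ‖ with hg1
  have hg10 : 0 ≤ g1 := integral_nonneg fun _ => norm_nonneg _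
  set h1 := ∫ ξ, hh ξ with hh1
  have hh10 : 0 ≤ h1 := integral_nonneg hh0
  refine ⟨g1 * h1 + 1, by positivity, fun F hF => ?_⟩
  set u : R2 → ℝ := fun η => wm η * ‖F η‖ ^ 2 with hu
  have hu0 : ∀ η, 0 ≤ u η := fun η => mul_nonneg (wm_pos η).le (sq_nonneg _)
  have hconv := hF.2.integrable_convolution (ContinuousLinearMap.mul ℝ ℝ) hhi
  have hconvint := integral_convolution (ContinuousLinearMap.mul ℝ ℝ) hF.2 hhi (μ := volume) (ν := volume)
  have hcvF := cv_continuous h hF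
  -- pointwise bound
  have hFc := hF.1
  have hwc := wm_continuous
  have hpt : ∀ ξ, wm ξ * ‖cv G F ξ‖ ^ 2 ≤ g1 *
      (MeasureTheory.convolution (fun η => wm η * ‖F η‖ ^ 2) hh (ContinuousLinearMap.mul ℝ ℝ) volume) ξ := by
    intro ξ
    have i1 : Integrable (fun η => ‖G (ξ - η)‖) := (h.integrable.comp_sub_left ξ).norm
    have i2 : Integrable (fun η => ‖G (ξ - η)‖ * ‖F η‖) := by
      have := (cv_integrable h hF ξ).norm
      simpa [norm_mul] using this
    have i3 : Integrable (fun η => ‖G (ξ - η)‖ * ‖F η‖ ^ 2) := by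
      refine (hF.2.const_mul (C₁ * (1 + ‖ξ‖))).mono'
        (Continuous.aestronglyMeasurable (by fun_prop)) (Eventually.of_forall fun η => ?_)
      rw [Real.norm_of_nonneg (by positivity)]
      have e1 := hb₁ (ξ - η)
      have e2 := inv_le_wm η
      have e3 := peetre0 ξ η
      have e4 : (1 + ‖ξ - η‖)⁻¹ ≤ (1 + ‖ξ‖) * (1 + ‖η‖)⁻¹ := by
        rw [inv_le_iff_one_le_mul₀ (by positivity), mul_comm, ← mul_assoc, ← div_eq_mul_inv,
          le_div_iff₀ (by positivity)]
        linarith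
      rw [pow_one] at e1
      calc ‖G (ξ - η)‖ * ‖F η‖ ^ 2 ≤ (C₁ * ((1 + ‖ξ‖) * wm η)) * ‖F η‖ ^ 2 := by
            gcongr
            refine e1.trans ?_
            gcongr
            refine e4.trans ?_
            gcongr
        _ = _ := by ring
    have c1 : ‖cv G F ξ‖ ≤ ∫ η, ‖G (ξ - η)‖ * ‖F η‖ := by
      refine (norm_integral_le_integral_norm _).trans (le_of_eq ?_)
      simp
    have c2 := cs_integral (fun η => norm_nonneg (G (ξ - η))) i1 i2 i3
    have c3 : ∫ η, ‖G (ξ - η)‖ = g1 := integral_sub_left_eq_self (fun η => ‖G η‖) volume ξ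
    rw [c3] at c2
    have c4 : ‖cv G F ξ‖ ^ 2 ≤ g1 * ∫ η, ‖G (ξ - η)‖ * ‖F η‖ ^ 2 := by
      refine le_trans ?_ c2
      gcongr
    have c5 : wm ξ * ∫ η, ‖G (ξ - η)‖ * ‖F η‖ ^ 2 ≤ ∫ η, u η * hh (ξ - η) := by
      rw [← integral_const_mul]
      have hbd : ∃ C, ∀ x, ‖hh x‖ ≤ C := by
        refine ⟨2 * C₁, fun x => ?_⟩
        rw [Real.norm_of_nonneg (hh0 x)]
        have := hb₁ x
        rw [pow_one] at this
        simp only [hhd]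
        have hp : 0 < 1 + ‖x‖ := by positivity
        calc 2 * (1 + ‖x‖) * ‖G x‖ ≤ 2 * (1 + ‖x‖) * (C₁ * (1 + ‖x‖)⁻¹) := by gcongr
          _ = _ := by field_simp
      obtain ⟨C, hC⟩ := hbd
      refine integral_mono (i3.const_mul _) ?_ ?_
      · exact hF.2.mul_bdd (c := C) (Continuous.aestronglyMeasurable (by fun_prop)) (Eventually.of_forall fun η => hC _)
      · intro η
        simp only [hu, hhd]
        have := peetre ξ η
        calc wm ξ * (‖G (ξ - η)‖ * ‖F η‖ ^ 2)
            ≤ (2 * (1 + ‖ξ - η‖) * wm η) * (‖G (ξ - η)‖ * ‖F η‖ ^ 2) := by gcongr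
          _ = _ := by ring
    have c6 := (wm_pos ξ).le
    calc wm ξ * ‖cv G F ξ‖ ^ 2 ≤ wm ξ * (g1 * ∫ η, ‖G (ξ - η)‖ * ‖F η‖ ^ 2) := by gcongr
      _ = g1 * (wm ξ * ∫ η, ‖G (ξ - η)‖ * ‖F η‖ ^ 2) := by ring
      _ ≤ g1 * ∫ η, u η * hh (ξ - η) := by gcongr
  have hI : Integrable (fun ξ => wm ξ * ‖cv G F ξ‖ ^ 2) := by
    refine (hconv.const_mul g1).mono' (Continuous.aestronglyMeasurable (by fun_prop))
      (Eventually.of_forall fun ξ => ?_)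
    rw [Real.norm_of_nonneg (mul_nonneg (wm_pos ξ).le (sq_nonneg _))]
    exact hpt ξ
  refine ⟨⟨hcvF, hI⟩, ?_⟩
  have := integral_mono hI (hconv.const_mul g1) hpt
  rw [integral_const_mul, hconvint] at this
  refine this.trans ?_
  show g1 * (Nf F * h1) ≤ _
  nlinarith [Nf_nonneg F]

lemma WL2.integrable_mul {F g : R2 → ℂ} (hF : WL2 F) (hg : Fast g) :
    Integrable (fun ξ => F ξ * g ξ) := by
  have hg' : Fast (fun ξ => g (-ξ)) := by
    refine ⟨hg.1.comp continuous_neg, fun N => ?_⟩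
    obtain ⟨C, hC, hb⟩ := hg.2 N
    exact ⟨C, hC, fun ξ => by simpa using hb (-ξ)⟩
  have := cv_integrable hg' hF 0
  refine this.congr (Eventually.of_forall fun ξ => ?_)
  simp [mul_comm]

lemma WL2.integrable_decay_mul {F : R2 → ℂ} (hF : WL2 F) :
    Integrable (fun ξ => ((1 + ‖ξ‖) ^ 3)⁻¹ * ‖F ξ‖) := by
  have hFc := hF.1
  refine (integrable_decay.add hF.2).mono' ?_ (Eventually.of_forall fun ξ => ?_)
  · refine Continuous.aestronglyMeasurable (Continuous.mul (Continuous.inv₀ (by fun_prop) ?_) (by fun_prop))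
    intro x; positivity
  · rw [Real.norm_of_nonneg (by positivity)]
    have h1 := amgm ((1 + ‖ξ‖) ^ 3)⁻¹ ‖F ξ‖ 1 ξ one_pos
    simp only [inv_one, one_mul] at h1
    refine h1.trans ?_
    simp only [Pi.add_apply]
    gcongr
    have hp : 1 ≤ 1 + ‖ξ‖ := by linarith [norm_nonneg ξ]
    set p := 1 + ‖ξ‖
    have : (p ^ 3)⁻¹ ^ 2 * p = (p ^ 5)⁻¹ := by field_simp
    rw [this]
    gcongr
    norm_num

lemma WL2.add {F G : R2 → ℂ} (hF : WL2 F) (hG : WL2 G) : WL2 (fun ξ => F ξ + G ξ) := by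
  have h1 := hF.1
  have h2 := hG.1
  have h3 := wm_continuous
  refine ⟨h1.add h2, ((hF.2.const_mul 2).add (hG.2.const_mul 2)).mono'
    (Continuous.aestronglyMeasurable (by fun_prop)) (Eventually.of_forall fun ξ => ?_)⟩
  have h4 := (wm_pos ξ).le
  rw [Real.norm_of_nonneg (by positivity)]
  simp only [Pi.add_apply]
  have e3 : ‖F ξ + G ξ‖ ^ 2 ≤ 2 * ‖F ξ‖ ^ 2 + 2 * ‖G ξ‖ ^ 2 := by
    have := norm_add_le (F ξ) (G ξ)
    have h0 := norm_nonneg (F ξ + G ξ)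
    nlinarith [sq_nonneg (‖F ξ‖ - ‖G ξ‖)]
  nlinarith

lemma WL2.const_mul {F : R2 → ℂ} (hF : WL2 F) (c : ℂ) : WL2 (fun ξ => c * F ξ) := by
  have h1 := hF.1
  refine ⟨by fun_prop, (hF.2.const_mul (‖c‖ ^ 2)).congr (Eventually.of_forall fun ξ => ?_)⟩
  simp only [norm_mul]; ring

lemma WL2.sub {F G : R2 → ℂ} (hF : WL2 F) (hG : WL2 G) : WL2 (fun ξ => F ξ - G ξ) := by
  have := hF.add (hG.const_mul (-1))
  simpa [sub_eq_add_neg] using this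

lemma Nf_sub_le {F G : R2 → ℂ} (hF : WL2 F) (hG : WL2 G) :
    Nf (fun ξ => F ξ - G ξ) ≤ 2 * Nf F + 2 * Nf G := by
  unfold Nf
  rw [← integral_const_mul, ← integral_const_mul, ← integral_add (hF.2.const_mul 2) (hG.2.const_mul 2)]
  refine integral_mono (hF.sub hG).2 ((hF.2.const_mul 2).add (hG.2.const_mul 2)) fun ξ => ?_
  have h4 := (wm_pos ξ).le
  have e3 : ‖F ξ - G ξ‖ ^ 2 ≤ 2 * ‖F ξ‖ ^ 2 + 2 * ‖G ξ‖ ^ 2 := by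
    have := norm_sub_le (F ξ) (G ξ)
    have h0 := norm_nonneg (F ξ - G ξ)
    nlinarith [sq_nonneg (‖F ξ‖ - ‖G ξ‖)]
  simp only
  nlinarith

/-- Fourier-side kernel of multiplication by `χ`. -/
def gk (χ : R2 → ℂ) (ξ : R2) : ℂ := (((2 * π) ^ 2)⁻¹ : ℝ) * testFT χ (-ξ)

lemma Fast.const_mul {G : R2 → ℂ} (h : Fast G) (c : ℂ) : Fast (fun ξ => c * G ξ) := by
  refine ⟨continuous_const.mul h.1, fun N => ?_⟩
  obtain ⟨C, hC, hb⟩ := h.2 N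
  refine ⟨(‖c‖ + 1) * C, by positivity, fun ξ => ?_⟩
  rw [norm_mul, mul_assoc]
  have := hb ξ
  have h2 := norm_nonneg (G ξ)
  gcongr
  linarith

lemma Fast.comp_neg {G : R2 → ℂ} (h : Fast G) : Fast (fun ξ => G (-ξ)) := by
  refine ⟨h.1.comp continuous_neg, fun N => ?_⟩
  obtain ⟨C, hC, hb⟩ := h.2 N
  exact ⟨C, hC, fun ξ => by simpa using hb (-ξ)⟩

lemma Fast.coord_mul {G : R2 → ℂ} (h : Fast G) (i : Fin 2) : Fast (fun ξ => (ξ i : ℂ) * G ξ) := by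
  have h1 := h.1
  refine ⟨by fun_prop, fun N => ?_⟩
  obtain ⟨C, hC, hb⟩ := h.2 (N + 1)
  refine ⟨C, hC, fun ξ => ?_⟩
  have h2 : ‖(ξ i : ℂ)‖ ≤ 1 + ‖ξ‖ := by
    rw [Complex.norm_real]
    have := PiLp.norm_apply_le ξ i
    linarith
  rw [norm_mul]
  have hp : 0 < 1 + ‖ξ‖ := by positivity
  have h3 := hb ξ
  set p := 1 + ‖ξ‖
  calc _ ≤ p * (C * (p ^ (N + 1))⁻¹) := by gcongr
    _ = _ := by rw [pow_succ]; field_simp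

lemma gk_fast {χ : R2 → ℂ} (h : IsTest χ) : Fast (gk χ) :=
  ((testFT_fast h).comp_neg).const_mul _

lemma pairing {χ φ F : R2 → ℂ} (hχ : IsTest χ) (hφ : IsTest φ) (hF : WL2 F) :
    ∫ ξ, cv (gk χ) F ξ * testFT φ ξ = ∫ η, F η * testFT (fun x => χ x * φ x) η := by
  have hG := gk_fast hχ
  have hΦ := testFT_fast hφ
  have h1 : ∫ ξ, cv (gk χ) F ξ * testFT φ ξ
      = ∫ ξ, ∫ η, gk χ (ξ - η) * F η * testFT φ ξ := by
    congr 1; ext ξ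
    rw [integral_mul_const]; rfl
  rw [h1, integral_integral_swap]
  · congr 1; ext η
    rw [testFT_mul hχ hφ, ← integral_const_mul, ← integral_const_mul]
    congr 1; ext ξ
    unfold gk
    rw [neg_sub]; ring
  · obtain ⟨C, hC, hb⟩ := hG.2 3
    obtain ⟨C', hC', hb'⟩ := hΦ.2 6
    have hi := (integrable_decay.mul_prod hF.integrable_decay_mul).const_mul (C * C')
    refine hi.mono' ?_ (Eventually.of_forall fun p => ?_)
    · have := hG.1
      have := hΦ.1
      have := hF.1
      simp only [Function.uncurry_def]
      exact Continuous.aestronglyMeasurable (by fun_prop)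
    · simp only [Function.uncurry_def, norm_mul]
      obtain ⟨ξ, η⟩ := p
      simp only
      have e1 := hb (ξ - η)
      have e2 := hb' ξ
      have e3 := peetre0 ξ η
      have hp : 0 < 1 + ‖ξ‖ := by positivity
      have hq : 0 < 1 + ‖η‖ := by positivity
      have hr : 0 < 1 + ‖ξ - η‖ := by positivity
      have e4 : ((1 + ‖ξ - η‖) ^ 3)⁻¹ ≤ (1 + ‖ξ‖) ^ 3 * ((1 + ‖η‖) ^ 3)⁻¹ := by
        rw [← div_eq_mul_inv, le_div_iff₀ (by positivity), inv_mul_le_iff₀ (by positivity)]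
        calc _ ≤ ((1 + ‖ξ‖) * (1 + ‖ξ - η‖)) ^ 3 := by gcongr
          _ = _ := by ring
      calc ‖gk χ (ξ - η)‖ * ‖F η‖ * ‖testFT φ ξ‖
          ≤ (C * ((1 + ‖ξ‖) ^ 3 * ((1 + ‖η‖) ^ 3)⁻¹)) * ‖F η‖ * (C' * ((1 + ‖ξ‖) ^ 6)⁻¹) := by
            gcongr
            refine e1.trans ?_
            gcongr
        _ = _ := by field_simp

/-- Support condition together with the `H^{-1/2}` condition. -/
def HT (Γ : Set R2) (F : R2 → ℂ) : Prop := WL2 F ∧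
  ∀ φ, IsTest φ → tsupport φ ∩ closure Γ = ∅ → ∫ ξ, F ξ * testFT φ ξ = 0

lemma testFT_sub {φ ψ : R2 → ℂ} (hφ : IsTest φ) (hψ : IsTest ψ) (ξ : R2) :
    testFT (fun x => φ x - ψ x) ξ = testFT φ ξ - testFT ψ ξ := by
  unfold testFT
  have : ∀ f : R2 → ℂ, IsTest f → Integrable (fun x => cexp (I * ↑(rdot x ξ)) * f x) := by
    intro f hf
    refine hf.integrable.bdd_mul (c := 1) ?_ (Eventually.of_forall fun x => (norm_cexp_I_rdot _).le)
    have := (rdot_contDiff ξ).continuous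
    exact Continuous.aestronglyMeasurable (by fun_prop)
  rw [← integral_sub (this _ hφ) (this _ hψ)]
  simp only [mul_sub]

lemma reproducing {Γ : Set R2} {χ F : R2 → ℂ} (hχ : IsTest χ) (hF : HT Γ F)
    {O : Set R2} (hO : IsOpen O) (hΓO : closure Γ ⊆ O) (h1 : ∀ x ∈ O, χ x = 1) :
    ∀ ξ, cv (gk χ) F ξ = F ξ := by
  obtain ⟨C, hC, hW⟩ := cv_WL2 (gk_fast hχ)
  have hD := hF.1.sub (hW F hF.1).1
  have hz : (fun ξ => F ξ - cv (gk χ) F ξ) = 0 := by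
    apply zero_of_annihilate hD.1
    · intro φ hφ
      exact hD.integrable_mul (testFT_fast hφ)
    · intro φ hφ
      simp_rw [sub_mul]
      rw [integral_sub (hF.1.integrable_mul (testFT_fast hφ))
        ((hW F hF.1).1.integrable_mul (testFT_fast hφ)), pairing hχ hφ hF.1,
        ← integral_sub (hF.1.integrable_mul (testFT_fast hφ))
        (hF.1.integrable_mul (testFT_fast (hχ.mul hφ)))]
      simp_rw [← mul_sub, ← testFT_sub hφ (hχ.mul hφ)]
      apply hF.2 _ ⟨hφ.1.sub (hχ.mul hφ).1, hφ.2.sub (hχ.mul hφ).2⟩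
      rw [← Set.disjoint_iff_inter_eq_empty]
      have hs : tsupport (fun x => φ x - χ x * φ x) ⊆ Oᶜ := by
        apply closure_minimal _ hO.isClosed_compl
        intro x hx hxO
        apply hx
        simp [h1 x hxO]
      exact (Set.disjoint_compl_left_iff_subset.2 hΓO).mono_left hs
  intro ξ
  have := congrFun hz ξ
  simp only [Pi.zero_apply] at this
  exact (sub_eq_zero.1 this).symm

/-- moment functions -/
def mom (θ : R2 → ℂ) (i : Fin 2) (a : R2) : ℂ := (a i : ℂ) * θ a

lemma mom_test {θ : R2 → ℂ} (h : IsTest θ) (i : Fin 2) : IsTest (mom θ i) := by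
  refine ⟨?_, h.2.mul_left⟩
  have h1 : ContDiff ℝ ∞ (fun a : R2 => a i) := by fun_prop
  have : ContDiff ℝ ∞ (fun a : R2 => ((a i : ℝ) : ℂ)) := ofRealCLM.contDiff.comp h1
  exact this.mul h.1

def Kk (θ : R2 → ℂ) (i : Fin 2) (ξ : R2) : ℂ := ∫ t in (0:ℝ)..1, testFT (mom θ i) (-(t • ξ))

lemma Kk_continuous {θ : R2 → ℂ} (h : IsTest θ) (i : Fin 2) : Continuous (Kk θ i) := by
  have := (testFT_fast (mom_test h i)).1
  unfold Kk
  apply intervalIntegral.continuous_parametric_intervalIntegral_of_continuous' (f := fun ξ t => testFT (mom θ i) (-(t • ξ)))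
  simp only [Function.uncurry_def]
  fun_prop

lemma Kk_bound {θ : R2 → ℂ} (h : IsTest θ) (i : Fin 2) :
    ∃ C : ℝ, 0 < C ∧ ∀ ξ, ‖Kk θ i ξ‖ ≤ C * (1 + ‖ξ‖)⁻¹ := by
  obtain ⟨C, hC, hb⟩ := (testFT_fast (mom_test h i)).2 2
  refine ⟨C, hC, fun ξ => ?_⟩
  unfold Kk
  set s := ‖ξ‖ with hs
  have hs0 : 0 ≤ s := norm_nonneg _
  have hd : ∀ t ∈ Set.uIcc (0:ℝ) 1, HasDerivAt (fun t => C * (t / (1 + t * s))) (C * ((1 + t * s) ^ 2)⁻¹) t := by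
    intro t ht
    rw [Set.uIcc_of_le zero_le_one] at ht
    have hp : 1 + t * s ≠ 0 := by have := mul_nonneg ht.1 hs0; positivity
    have h1 := (hasDerivAt_id t).div (((hasDerivAt_id t).mul_const s).const_add 1) hp
    refine (h1.const_mul C).congr_deriv ?_
    show C * ((1 * (1 + t * s) - t * (1 * s)) / (1 + t * s) ^ 2) = _
    rw [div_eq_mul_inv]
    ring
  have hc : ContinuousOn (fun t : ℝ => C * ((1 + t * s) ^ 2)⁻¹) (Set.uIcc (0:ℝ) 1) := by
    apply ContinuousOn.mul continuousOn_const
    apply ContinuousOn.inv₀ (by fun_prop)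
    intro t ht
    rw [Set.uIcc_of_le zero_le_one] at ht
    have := mul_nonneg ht.1 hs0; positivity
  have hI := intervalIntegral.integral_eq_sub_of_hasDerivAt hd hc.intervalIntegrable
  have h2 : ‖∫ t in (0:ℝ)..1, testFT (mom θ i) (-(t • ξ))‖ ≤ ∫ t in (0:ℝ)..1, C * ((1 + t * s) ^ 2)⁻¹ := by
    apply intervalIntegral.norm_integral_le_of_norm_le zero_le_one _ hc.intervalIntegrable
    refine Eventually.of_forall fun t ht => ?_
    have := hb (-(t • ξ))
    rw [norm_neg, norm_smul, Real.norm_of_nonneg ht.1.le] at this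
    exact this
  rw [hI] at h2
  refine h2.trans (le_of_eq ?_)
  simp

lemma Kk_div {θ : R2 → ℂ} (h : IsTest θ) (ξ : R2) :
    I * ((ξ 0 : ℂ) * Kk θ 0 ξ + (ξ 1 : ℂ) * Kk θ 1 ξ) = testFT θ 0 - testFT θ (-ξ) := by
  have hc0 := (testFT_fast (mom_test h 0)).1
  have hc1 := (testFT_fast (mom_test h 1)).1
  have hθ := h.1.continuous
  have hd : ∀ t : ℝ, HasDerivAt (fun t : ℝ => testFT θ (-(t • ξ)))
      (-I * ((ξ 0 : ℂ) * testFT (mom θ 0) (-(t • ξ)) + (ξ 1 : ℂ) * testFT (mom θ 1) (-(t • ξ)))) t := by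
    intro t
    have hr := (rdot_contDiff ξ).continuous
    have hfin : ∀ η : R2, ∀ f : R2 → ℂ, IsTest f → Integrable (fun x => cexp (I * ↑(rdot x η)) * f x) := by
      intro η f hf
      refine hf.integrable.bdd_mul (c := 1) ?_ (Eventually.of_forall fun x => (norm_cexp_I_rdot _).le)
      have := (rdot_contDiff η).continuous
      exact Continuous.aestronglyMeasurable (by fun_prop)
    have key := hasDerivAt_integral_of_dominated_loc_of_deriv_le (μ := (volume : Measure R2))
      (F := fun (t : ℝ) (a : R2) => cexp (I * (rdot a (-(t • ξ)) : ℂ)) * θ a)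
      (F' := fun (t : ℝ) (a : R2) => cexp (I * (rdot a (-(t • ξ)) : ℂ)) * (-I * (rdot a ξ : ℂ)) * θ a)
      (bound := fun a => |rdot a ξ| * ‖θ a‖) (x₀ := t) (s := Set.univ) Filter.univ_mem
      (Eventually.of_forall fun t => (hfin _ θ h).aestronglyMeasurable)
      (hfin _ θ h)
      (by
        simp_rw [rdot_neg_right, rdot_smul_right]
        exact Continuous.aestronglyMeasurable (by fun_prop))
      (Eventually.of_forall fun a t _ => by
        rw [norm_mul, norm_mul, norm_cexp_I_rdot]; simp)
      (by
        apply Continuous.integrable_of_hasCompactSupport (by fun_prop)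
        exact h.2.norm.mul_left)
      (Eventually.of_forall fun a t _ => by
        simp_rw [rdot_neg_right, rdot_smul_right]
        have h1 : HasDerivAt (fun t : ℝ => I * ((-(t * rdot a ξ) : ℝ) : ℂ)) (-I * (rdot a ξ : ℂ)) t := by
          have h2 : HasDerivAt (fun t : ℝ => (-(t * rdot a ξ) : ℝ)) (-(1 * rdot a ξ)) t :=
            ((hasDerivAt_id t).mul_const _).neg
          have h3 := h2.ofReal_comp.const_mul I
          refine h3.congr_deriv ?_
          push_cast; ring
        exact (h1.cexp).mul_const (θ a))
    refine HasDerivAt.congr_deriv (f := fun t : ℝ => testFT θ (-(t • ξ))) key.2 ?_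
    symm
    unfold testFT
    rw [← integral_const_mul, ← integral_const_mul, ← integral_add, ← integral_const_mul]
    · congr 1; ext a
      simp only [mom, rdot]
      push_cast
      ring
    · exact (hfin _ _ (mom_test h 0)).const_mul _
    · exact (hfin _ _ (mom_test h 1)).const_mul _
  have hcc : Continuous (fun t : ℝ => -I * ((ξ 0 : ℂ) * testFT (mom θ 0) (-(t • ξ)) + (ξ 1 : ℂ) * testFT (mom θ 1) (-(t • ξ)))) := by
    fun_prop
  have hI := intervalIntegral.integral_eq_sub_of_hasDerivAt (a := 0) (b := 1) (fun t _ => hd t)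
    (hcc.intervalIntegrable 0 1)
  unfold Kk
  rw [intervalIntegral.integral_const_mul, intervalIntegral.integral_add, 
    intervalIntegral.integral_const_mul, intervalIntegral.integral_const_mul] at hI
  · simp only [one_smul, zero_smul, neg_zero] at hI
    linear_combination -hI
  · exact Continuous.intervalIntegrable (by fun_prop) _ _
  · exact Continuous.intervalIntegrable (by fun_prop) _ _

lemma Kk_support {θ : R2 → ℂ} (h : IsTest θ) (i : Fin 2) {A φ : R2 → ℂ} (hA : WL2 A) (hφ : IsTest φ)
    (hz : ∀ a, θ a ≠ 0 → ∀ t ∈ Set.Icc (0:ℝ) 1, ∫ ξ, A ξ * testFT (fun x => φ (x + t • a)) ξ = 0) :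
    ∫ ξ, Kk θ i ξ * A ξ * testFT φ ξ = 0 := by
  have hm := mom_test h i
  have hmF := testFT_fast hm
  have hmc := hmF.1
  have hΦc := (testFT_fast hφ).1
  have hAc := hA.1
  have hAΦ := hA.integrable_mul (testFT_fast hφ)
  have h1 : ∫ ξ, Kk θ i ξ * A ξ * testFT φ ξ
      = ∫ ξ, ∫ t in Set.Ioc (0:ℝ) 1, testFT (mom θ i) (-(t • ξ)) * (A ξ * testFT φ ξ) := by
    congr 1; ext ξ
    unfold Kk
    rw [intervalIntegral.integral_of_le zero_le_one, integral_mul_const, mul_assoc]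
  rw [h1, integral_integral_swap]
  · apply setIntegral_eq_zero_of_forall_eq_zero
    intro t ht
    have h2 : ∫ ξ, testFT (mom θ i) (-(t • ξ)) * (A ξ * testFT φ ξ)
        = ∫ ξ, ∫ a, cexp (I * (rdot a (-(t • ξ)) : ℂ)) * mom θ i a * (A ξ * testFT φ ξ) := by
      congr 1; ext ξ
      rw [integral_mul_const]; rfl
    rw [h2, integral_integral_swap]
    · apply integral_eq_zero_of_ae
      refine Eventually.of_forall fun a => ?_
      simp only [Pi.zero_apply]
      by_cases ha : θ a = 0
      · simp [mom, ha]
      · have h3 := hz a ha t ⟨ht.1.le, ht.2⟩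
        have h4 : ∫ ξ, cexp (I * (rdot a (-(t • ξ)) : ℂ)) * mom θ i a * (A ξ * testFT φ ξ)
            = mom θ i a * ∫ ξ, A ξ * testFT (fun x => φ (x + t • a)) ξ := by
          rw [← integral_const_mul]
          congr 1; ext ξ
          rw [testFT_translate, rdot_neg_right, rdot_smul_right, rdot_smul_left]
          push_cast
          rw [mul_neg]
          ring
        rw [h4, h3, mul_zero]
    · refine (hAΦ.norm.mul_prod hm.integrable.norm).mono' ?_ (Eventually.of_forall fun p => ?_)
      · have := hm.1.continuous
        have : Continuous (fun p : R2 × R2 => rdot p.2 (-(t • p.1))) :=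
          rdot_continuous.comp (by fun_prop : Continuous fun p : R2 × R2 => (p.2, -(t • p.1)))
        simp only [Function.uncurry_def]
        exact Continuous.aestronglyMeasurable (by fun_prop)
      · simp only [Function.uncurry_def, norm_mul, norm_cexp_I_rdot]
        apply le_of_eq; ring
  · obtain ⟨C, hC, hb⟩ := hmF.2 0
    have hone : Integrable (fun _ : ℝ => C) (volume.restrict (Set.Ioc (0:ℝ) 1)) :=
      integrable_const C
    refine (hAΦ.norm.mul_prod hone).mono' ?_ (Eventually.of_forall fun p => ?_)
    · simp only [Function.uncurry_def]
      exact Continuous.aestronglyMeasurable (by fun_prop)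
    · simp only [Function.uncurry_def, norm_mul]
      have := hb (-(p.2 • p.1))
      simp only [pow_zero, inv_one, mul_one] at this
      rw [mul_comm]
      gcongr

theorem coord_le_norm (x : R2) (i : Fin 2) : |x i| ≤ ‖x‖ := by
  simpa using PiLp.norm_apply_le x i

theorem local_cone {Γ : Set R2} (hΓ : IsLipschitzDomain Γ) (x : R2) (hx : x ∈ closure Γ) :
    ∃ r > 0, ∃ a₀ : R2, ∃ ρ > 0, ∀ y ∈ closure Γ, y ∈ Metric.ball x r → ∀ a ∈ Metric.ball a₀ ρ,
      ∀ t ∈ Set.Icc (0:ℝ) 1, y + t • a ∈ closure Γ := by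
  obtain ⟨ho, hb, hne, hl⟩ := hΓ
  by_cases hxΓ : x ∈ Γ
  · obtain ⟨r, hr, hsub⟩ := Metric.isOpen_iff.1 ho x hxΓ
    refine ⟨r/2, by positivity, 0, r/2, by positivity, ?_⟩
    intro y _ hy a ha t ht
    apply subset_closure
    apply hsub
    rw [mem_ball_iff_norm] at *
    rw [sub_zero] at ha
    have : ‖t • a‖ ≤ ‖a‖ := by
      rw [norm_smul, Real.norm_of_nonneg ht.1]
      exact mul_le_of_le_one_left (norm_nonneg _) ht.2
    calc ‖y + t • a - x‖ = ‖(y - x) + t • a‖ := by congr 1; abel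
      _ ≤ ‖y - x‖ + ‖t • a‖ := norm_add_le _ _
      _ < r := by linarith
  · have hf : x ∈ frontier Γ := by
      rw [frontier, ho.interior_eq]; exact ⟨hx, hxΓ⟩
    obtain ⟨e, L, f, U, hL, hU, hxU, hiff⟩ := hl x hf
    obtain ⟨r, hr, hsub⟩ := Metric.isOpen_iff.1 hU x hxU
    set δ := r/8 with hδ
    have hδ0 : 0 < δ := by positivity
    have hL0 : (0:ℝ) ≤ L := L.2
    set ρ := δ/(2*(L+1)) with hρ
    have hρ0 : 0 < ρ := by positivity
    have hρL : ρ * (L+1) = δ/2 := by rw [hρ]; field_simp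
    have hLρ : (L:ℝ)*ρ < δ/2 := by nlinarith
    have hρ2 : ρ ≤ δ/2 := by nlinarith
    refine ⟨r/2, by positivity, e.symm !₂[0,δ], ρ, hρ0, ?_⟩
    intro y hyc hy a ha t ht
    have hyU : y ∈ U := hsub (Metric.ball_subset_ball (by linarith) hy)
    have hfy : f (e y 0) ≤ e y 1 := by
      have h1 : y ∈ closure (Γ ∩ U) := by
        rw [mem_closure_iff_nhds] at hyc ⊢
        intro t ht
        obtain ⟨z, hz⟩ := hyc (t ∩ U) (inter_mem ht (hU.mem_nhds hyU))
        exact ⟨z, hz.1.1, hz.2, hz.1.2⟩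
      have hc : IsClosed {z : R2 | f (e z 0) ≤ e z 1} := by
        apply isClosed_le
        · apply hL.continuous.comp
          have := e.continuous
          fun_prop
        · have := e.continuous
          fun_prop
      refine closure_minimal ?_ hc h1
      intro z hz
      exact ((hiff z hz.2).1 hz.1).le
    rcases ht.1.eq_or_lt with h0 | h0
    · rw [← h0]; simpa using hyc
    have hea : ‖e a - !₂[0,δ]‖ < ρ := by
      rw [mem_ball_iff_norm] at ha
      have : e a - !₂[0,δ] = e (a - e.symm !₂[0,δ]) := by simp
      rw [this, e.norm_map]; exact ha
    have h0' : |e a 0| < ρ := by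
      have := coord_le_norm (e a - !₂[0,δ]) 0
      simp at this
      linarith
    have h1' : |e a 1 - δ| < ρ := by
      have := coord_le_norm (e a - !₂[0,δ]) 1
      simp at this
      linarith
    have hna : ‖a‖ < 2*δ := by
      have h3 : ‖(!₂[0,δ] : R2)‖ = δ := by
        rw [EuclideanSpace.norm_eq]; simp [abs_of_pos hδ0]
        rw [Real.sqrt_sq hδ0.le]
      have : ‖e a‖ ≤ ‖e a - !₂[0,δ]‖ + ‖(!₂[0,δ] : R2)‖ := by
        simpa using norm_add_le (e a - !₂[0,δ]) (!₂[0,δ] : R2)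
      rw [e.norm_map, h3] at this
      linarith
    apply subset_closure
    have hmU : y + t • a ∈ U := by
      apply hsub
      rw [mem_ball_iff_norm] at *
      have : ‖t • a‖ ≤ ‖a‖ := by
        rw [norm_smul, Real.norm_of_nonneg ht.1]
        exact mul_le_of_le_one_left (norm_nonneg _) ht.2
      calc ‖y + t • a - x‖ = ‖(y - x) + t • a‖ := by congr 1; abel
        _ ≤ ‖y - x‖ + ‖t • a‖ := norm_add_le _ _
        _ < r := by linarith
    rw [hiff _ hmU]
    have he0 : e (y + t • a) 0 = e y 0 + t * e a 0 := by simp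
    have he1 : e (y + t • a) 1 = e y 1 + t * e a 1 := by simp
    rw [he0, he1]
    have hl2 := hL.dist_le_mul (e y 0 + t * e a 0) (e y 0)
    rw [Real.dist_eq, Real.dist_eq, add_sub_cancel_left, abs_mul, abs_of_pos h0] at hl2
    have h4 := le_abs_self (f (e y 0 + t * e a 0) - f (e y 0))
    have h5 : (L:ℝ) * (t * |e a 0|) ≤ t * (L * ρ) := by
      have : (L:ℝ)*|e a 0| ≤ L*ρ := mul_le_mul_of_nonneg_left h0'.le hL0
      calc (L:ℝ) * (t * |e a 0|) = t * (L * |e a 0|) := by ring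
        _ ≤ _ := mul_le_mul_of_nonneg_left this h0.le
    have h6 : (L:ℝ)*ρ < e a 1 := by
      have := (abs_lt.1 h1').1
      linarith
    have h7 := mul_lt_mul_of_pos_left h6 h0
    linarith

theorem cone_partition {Γ : Set R2} (hΓ : IsLipschitzDomain Γ) :
    ∃ (n : ℕ) (χ θ : Fin n → R2 → ℂ) (O : Set R2), (∀ j, IsTest (χ j)) ∧ (∀ j, IsTest (θ j)) ∧
      (∀ j, testFT (θ j) 0 = 1) ∧ IsOpen O ∧ closure Γ ⊆ O ∧ (∀ x ∈ O, ∑ j, χ j x = 1) ∧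
      ∀ j, ∀ y ∈ closure Γ, y ∈ tsupport (χ j) → ∀ a, θ j a ≠ 0 → ∀ t ∈ Set.Icc (0:ℝ) 1,
        y + t • a ∈ closure Γ := by
  have hcpt : IsCompact (closure Γ) := hΓ.2.1.isCompact_closure
  have hcone := local_cone hΓ
  choose! r hr a₀ ρ hρ hc using hcone
  obtain ⟨s, hs, hcov⟩ := hcpt.elim_nhds_subcover (fun x => Metric.ball x (r x))
    (fun x hx => Metric.ball_mem_nhds x (hr x hx))
  obtain ⟨L, hL, hL1, hL2⟩ := exists_compact_between hcpt
    (isOpen_biUnion (fun x (_ : x ∈ s) => Metric.isOpen_ball)) hcov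
  let e := s.equivFin.symm
  let p : Fin s.card → R2 := fun j => (e j : R2)
  have hp : ∀ j, p j ∈ closure Γ := fun j => hs _ (e j).2
  obtain ⟨f, hf⟩ := SmoothPartitionOfUnity.exists_isSubordinate (modelWithCornersSelf ℝ R2)
    hL.isClosed (fun j : Fin s.card => Metric.ball (p j) (r (p j))) (fun j => Metric.isOpen_ball)
    (by
      intro x hx
      obtain ⟨y, hy, hxy⟩ := Set.mem_iUnion₂.1 (hL2 hx)
      refine Set.mem_iUnion.2 ⟨s.equivFin ⟨y, hy⟩, ?_⟩
      simpa [p, e] using hxy)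
  let b : ∀ j, ContDiffBump (a₀ (p j)) := fun j =>
    ⟨ρ (p j)/2, ρ (p j), by have := hρ _ (hp j); positivity, by have := hρ _ (hp j); linarith⟩
  have hsupp : ∀ j, tsupport (fun x => ((f j x : ℝ) : ℂ)) ⊆ tsupport (f j) := by
    intro j
    exact tsupport_comp_subset (g := Complex.ofReal) (by simp) (f j)
  refine ⟨s.card, fun j x => ((f j x : ℝ) : ℂ), fun j x => (((b j).normed volume x : ℝ) : ℂ),
    interior L, ?_, ?_, ?_, isOpen_interior, hL1, ?_, ?_⟩
  · intro j
    refine ⟨Complex.ofRealCLM.contDiff.comp (f j).contMDiff.contDiff, ?_⟩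
    refine HasCompactSupport.of_support_subset_isCompact (isCompact_closedBall (p j) (r (p j))) ?_
    exact (subset_tsupport _).trans ((hsupp j).trans ((hf j).trans Metric.ball_subset_closedBall))
  · intro j
    refine ⟨Complex.ofRealCLM.contDiff.comp (b j).contDiff_normed, ?_⟩
    exact ((b j).hasCompactSupport_normed).comp_left (g := Complex.ofReal) (by simp)
  · intro j
    have : testFT (fun x => (((b j).normed volume x : ℝ) : ℂ)) 0
        = ∫ x, (((b j).normed volume x : ℝ) : ℂ) := by
      unfold testFT; simp [rdot]
    rw [this, integral_complex_ofReal, (b j).integral_normed]; simp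
  · intro x hx
    have := f.sum_eq_one (interior_subset hx)
    rw [finsum_eq_sum_of_fintype] at this
    rw [← Complex.ofReal_sum, this]; simp
  · intro j y hy hyt a ha t ht
    refine hc (p j) (hp j) y hy (hf j (hsupp j hyt)) a ?_ t ht
    have : a ∈ Function.support ((b j).normed volume) := by
      intro h; apply ha; simp [h]
    rw [(b j).support_normed_eq] at this
    exact this

theorem g0_norm (k : ℝ) (hk : 0 < k) (ξ : R2) : ‖g0hat k ξ‖ = (√|‖ξ‖^2 - k^2|)⁻¹ := by
  unfold g0hat
  split_ifs with h
  · have : ‖ξ‖^2 - k^2 < 0 := by nlinarith [norm_nonneg ξ]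
    rw [norm_div, Complex.norm_I, Complex.norm_real, Real.norm_of_nonneg (Real.sqrt_nonneg _),
      abs_of_neg this, neg_sub, one_div]
  · have : 0 ≤ ‖ξ‖^2 - k^2 := by nlinarith [norm_nonneg ξ]
    rw [norm_div, norm_one, Complex.norm_real, Real.norm_of_nonneg (Real.sqrt_nonneg _),
      abs_of_nonneg this, one_div]

theorem g0_measurable (k : ℝ) : Measurable (g0hat k) := by
  unfold g0hat
  refine Measurable.ite ?_ ?_ ?_
  · exact measurableSet_lt (by fun_prop) (by fun_prop)
  · fun_prop
  · fun_prop

theorem g0_re_nonneg (k : ℝ) (ξ : R2) : 0 ≤ (g0hat k ξ).re := by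
  unfold g0hat
  split_ifs with h
  · rw [Complex.div_ofReal_re]; simp
  · rw [Complex.div_ofReal_re]; simp

theorem g0_re_ge (k : ℝ) (hk : 0 < k) (ξ : R2) (h : k < ‖ξ‖) : wm ξ ≤ (g0hat k ξ).re := by
  unfold g0hat
  rw [if_neg (by linarith), Complex.div_ofReal_re, wm_eq]
  simp only [Complex.one_re, one_div]
  have : 0 < ‖ξ‖^2 - k^2 := by nlinarith [norm_nonneg ξ]
  apply inv_anti₀ (Real.sqrt_pos.2 this)
  apply Real.sqrt_le_sqrt
  nlinarith

theorem g0_le (k : ℝ) (hk : 0 < k) (ξ : R2) (h : 2*k+1 ≤ ‖ξ‖) : ‖g0hat k ξ‖ ≤ 2 * wm ξ := by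
  rw [g0_norm k hk, wm_eq]
  have : 0 < ‖ξ‖^2 - k^2 := by nlinarith [norm_nonneg ξ]
  rw [abs_of_pos this]
  have h1 : √(1+‖ξ‖^2) ≤ 2 * √(‖ξ‖^2-k^2) := by
    apply Real.sqrt_le_iff.2
    refine ⟨by positivity, ?_⟩
    rw [mul_pow, Real.sq_sqrt this.le]
    nlinarith
  have h2 : 0 < √(1+‖ξ‖^2) := Real.sqrt_pos.2 (by positivity)
  have h3 := Real.sqrt_pos.2 this
  rw [← div_eq_mul_inv, inv_eq_one_div, div_le_div_iff₀ h3 h2]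
  linarith

theorem g0_aux (k R : ℝ) (hk : 0 < k) :
    IntegrableOn (fun y : ℝ => y * (Set.Iic R).indicator (fun y => (√|y^2-k^2|)⁻¹) y)
      (Set.Ioi 0) := by
  rcases le_or_gt R 0 with hR | hR
  · refine IntegrableOn.congr_fun (f := fun _ => 0) (by simp) ?_ measurableSet_Ioi
    intro y hy
    have : y ∉ Set.Iic R := by simp at hy ⊢; linarith
    simp [Set.indicator_of_notMem this]
  have h0 : IntervalIntegrable (fun y : ℝ => |y|^(-(1/2):ℝ)) volume (0-k) (R-k) := by
    apply intervalIntegrable_of_even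
    · intro x; simp
    · intro x hx
      refine (intervalIntegral.intervalIntegrable_rpow' (r := -(1/2)) (by norm_num)).congr ?_
      intro y hy
      rw [Set.uIoc_of_le hx.le] at hy
      simp only [abs_of_pos hy.1]
    · exact enorm_ne_top
    · exact enorm_ne_top
  have h1 := (h0.comp_sub_right k)
  simp only [sub_add_cancel] at h1
  rw [intervalIntegrable_iff_integrableOn_Ioc_of_le hR.le] at h1
  have h2 : IntegrableOn (fun y : ℝ => y * (Set.Iic R).indicator (fun y => (√|y^2-k^2|)⁻¹) y)
      (Set.Ioc 0 R) := by
    refine Integrable.mono' (h1.const_mul (R * k^(-(1/2):ℝ))) ?_ ?_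
    · apply Measurable.aestronglyMeasurable
      apply Measurable.mul measurable_id
      exact Measurable.indicator (by fun_prop) measurableSet_Iic
    · refine (ae_restrict_iff' measurableSet_Ioc).2 (ae_of_all _ ?_)
      intro y hy
      have hy' : y ∈ Set.Iic R := hy.2
      rw [Set.indicator_of_mem hy', norm_mul, Real.norm_of_nonneg hy.1.le,
        Real.norm_of_nonneg (by positivity), mul_assoc]
      apply mul_le_mul hy.2 _ (by positivity) hR.le
      rw [← Real.mul_rpow hk.le (abs_nonneg _), Real.rpow_neg (by positivity), ← Real.sqrt_eq_rpow]
      rcases eq_or_ne y k with rfl | hne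
      · simp
      have : 0 < |y-k| := abs_pos.2 (sub_ne_zero.2 hne)
      apply inv_anti₀ (Real.sqrt_pos.2 (by positivity))
      apply Real.sqrt_le_sqrt
      have : y^2-k^2 = (y-k)*(y+k) := by ring
      rw [this, abs_mul, abs_of_pos (a := y+k) (by linarith [hy.1]), mul_comm k]
      apply mul_le_mul_of_nonneg_left _ (abs_nonneg _)
      linarith [hy.1]
  have h3 : IntegrableOn (fun y : ℝ => y * (Set.Iic R).indicator (fun y => (√|y^2-k^2|)⁻¹) y)
      (Set.Ioi R) := by
    refine IntegrableOn.congr_fun (f := fun _ => 0) (by simp) ?_ measurableSet_Ioi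
    intro y hy
    have : y ∉ Set.Iic R := by simpa using hy
    simp [Set.indicator_of_notMem this]
  rw [← Set.Ioc_union_Ioi_eq_Ioi hR.le]
  exact h2.union h3

theorem g0_integrableOn (k R : ℝ) (hk : 0 < k) :
    IntegrableOn (g0hat k) (Metric.closedBall 0 R) := by
  have h := (integrable_fun_norm_addHaar (volume : Measure R2)
    (f := (Set.Iic R).indicator (fun y => (√|y^2-k^2|)⁻¹))).2 (by
      simpa using g0_aux k R hk)
  rw [IntegrableOn, ← integrable_norm_iff (g0_measurable k).aestronglyMeasurable]
  have h2 : (fun a => ‖g0hat k a‖) = fun ξ : R2 => (√|‖ξ‖^2-k^2|)⁻¹ := by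
    ext ξ; rw [g0_norm k hk]
  rw [h2, ← IntegrableOn, ← integrable_indicator_iff measurableSet_closedBall]
  refine h.congr (ae_of_all _ ?_)
  intro ξ
  by_cases hξ : ‖ξ‖ ≤ R
  · simp [Set.indicator, hξ]
  · simp [Set.indicator, hξ]

theorem dot_curl_sq (F1 F2 : R2 → ℂ) (ξ : R2) :
    ‖dotFt F1 F2 ξ‖^2 + ‖curlFt F1 F2 ξ‖^2 = ‖ξ‖^2 * (‖F1 ξ‖^2 + ‖F2 ξ‖^2) := by
  rw [EuclideanSpace.norm_sq_eq]
  simp only [Complex.sq_norm, Complex.normSq_apply, dotFt, curlFt, Fin.sum_univ_two, Real.norm_eq_abs, sq_abs]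
  simp
  ring

theorem norm_sq_coord (ξ : R2) : ‖ξ‖^2 = (ξ 0)^2 + (ξ 1)^2 := by
  rw [EuclideanSpace.norm_sq_eq]; simp

theorem curl_le (F1 F2 : R2 → ℂ) (ξ : R2) : ‖curlFt F1 F2 ξ‖ ≤ ‖ξ‖ * (‖F1 ξ‖ + ‖F2 ξ‖) := by
  unfold curlFt
  refine (norm_sub_le _ _).trans ?_
  rw [norm_mul, norm_mul, Complex.norm_real, Complex.norm_real, Real.norm_eq_abs, Real.norm_eq_abs, mul_add]
  exact add_le_add (mul_le_mul_of_nonneg_right (coord_le_norm ξ 1) (norm_nonneg _))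
    (mul_le_mul_of_nonneg_right (coord_le_norm ξ 0) (norm_nonneg _))

theorem curl_continuous {F1 F2 : R2 → ℂ} (h1 : Continuous F1) (h2 : Continuous F2) :
    Continuous (curlFt F1 F2) := by
  unfold curlFt; fun_prop

theorem dot_continuous {F1 F2 : R2 → ℂ} (h1 : Continuous F1) (h2 : Continuous F2) :
    Continuous (dotFt F1 F2) := by
  unfold dotFt; fun_prop

theorem Bint_curl (k : ℝ) (q F1 F2 : R2 → ℂ) (ξ : R2) :
    Bintegrand k (fun η => Complex.I * (η 1 : ℂ) * q η)
      (fun η => -(Complex.I * (η 0 : ℂ) * q η)) F1 F2 ξ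
    = -((k^2:ℝ):ℂ) * (Complex.I * g0hat k ξ * q ξ * starRingEnd ℂ (curlFt F1 F2 ξ)) := by
  have h1 : dotFt (fun η => Complex.I * (η 1 : ℂ) * q η)
      (fun η => -(Complex.I * (η 0 : ℂ) * q η)) ξ = 0 := by
    unfold dotFt; ring
  have h2 : curlFt (fun η => Complex.I * (η 1 : ℂ) * q η)
      (fun η => -(Complex.I * (η 0 : ℂ) * q η)) ξ = Complex.I * ((‖ξ‖^2:ℝ):ℂ) * q ξ := by
    rw [norm_sq_coord]; unfold curlFt; push_cast; ring
  unfold Bintegrand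
  rw [h1, h2]
  rcases eq_or_ne ξ 0 with rfl | hξ
  · simp [curlFt]
  · have : ((‖ξ‖^2:ℝ):ℂ) ≠ 0 := by
      have := norm_pos_iff.2 hξ
      exact_mod_cast (by positivity : (‖ξ‖^2:ℝ) ≠ 0)
    field_simp
    ring

theorem wm_half (ξ : R2) : ((1:ℝ) + ‖ξ‖^2)^(1/2:ℝ) = (wm ξ)⁻¹ := by
  rw [wm_eq, inv_inv, Real.sqrt_eq_rpow]

theorem wm_norm_le (ξ : R2) : wm ξ * ‖ξ‖ ≤ 1 := by
  rw [wm_eq, inv_mul_le_iff₀ (Real.sqrt_pos.2 (by positivity)), mul_one]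
  apply Real.le_sqrt_of_sq_le
  linarith

theorem B_integrable (k : ℝ) (hk : 0 < k) {q F1 F2 : R2 → ℂ} (hq : Continuous q)
    (hqi : Integrable (fun ξ : R2 => ((1 : ℝ) + ‖ξ‖ ^ 2) ^ (1/2:ℝ) * ‖q ξ‖ ^ 2))
    (h1 : WL2 F1) (h2 : WL2 F2) :
    Integrable (fun ξ => Complex.I * g0hat k ξ * q ξ * starRingEnd ℂ (curlFt F1 F2 ξ)) := by
  have hc := curl_continuous h1.1 h2.1
  have hcont : Continuous (fun ξ => q ξ * starRingEnd ℂ (curlFt F1 F2 ξ)) :=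
    hq.mul (Complex.continuous_conj.comp hc)
  have e : (fun ξ => Complex.I * g0hat k ξ * q ξ * starRingEnd ℂ (curlFt F1 F2 ξ))
      = fun ξ => Complex.I * (g0hat k ξ * (q ξ * starRingEnd ℂ (curlFt F1 F2 ξ))) := by
    ext; ring
  rw [e]
  apply Integrable.const_mul
  rw [← integrableOn_univ, ← Set.union_compl_self (Metric.closedBall (0:R2) (2*k+1))]
  apply IntegrableOn.union
  · exact (g0_integrableOn k _ hk).mul_continuousOn hcont.continuousOn (isCompact_closedBall _ _)
  · refine Integrable.mono' (g := fun ξ => 2 * ((((1 : ℝ) + ‖ξ‖ ^ 2) ^ (1/2:ℝ) * ‖q ξ‖ ^ 2) + (wm ξ * ‖F1 ξ‖^2 + wm ξ * ‖F2 ξ‖^2))) ?_ ?_ ?_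
    · exact ((hqi.add (h1.2.add h2.2)).const_mul 2).integrableOn
    · exact ((g0_measurable k).mul hcont.measurable).aestronglyMeasurable
    · refine (ae_restrict_iff' measurableSet_closedBall.compl).2 (ae_of_all _ ?_)
      intro ξ hξ
      have hξ' : 2*k+1 ≤ ‖ξ‖ := by
        simp at hξ; exact hξ.le
      have hg := g0_le k hk ξ hξ'
      rw [norm_mul, norm_mul, RCLike.norm_conj, wm_half]
      have hcl := curl_le F1 F2 ξ
      have hw := wm_pos ξ
      have hwn := wm_norm_le ξ
      set a := ‖q ξ‖
      set b := ‖F1 ξ‖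
      set c := ‖F2 ξ‖
      have ha : 0 ≤ a := norm_nonneg _
      have hb : 0 ≤ b := norm_nonneg _
      have hc0 : 0 ≤ c := norm_nonneg _
      have key : ∀ x : ℝ, 2 * (a * x) ≤ (wm ξ)⁻¹ * a^2 + wm ξ * x^2 := by
        intro x
        have : (wm ξ)⁻¹ * a^2 + wm ξ * x^2 - 2*(a*x) = (wm ξ)⁻¹ * (a - wm ξ * x)^2 := by
          field_simp; ring
        have : 0 ≤ (wm ξ)⁻¹ * (a - wm ξ * x)^2 := by positivity
        linarith
      calc ‖g0hat k ξ‖ * (a * ‖curlFt F1 F2 ξ‖) ≤ (2 * wm ξ) * (a * (‖ξ‖ * (b+c))) := by gcongr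
        _ = 2 * (wm ξ * ‖ξ‖) * (a*(b+c)) := by ring
        _ ≤ 2 * 1 * (a*(b+c)) := by gcongr
        _ ≤ _ := by
          have p1 : 0 ≤ wm ξ * b^2 := by positivity
          have p2 : 0 ≤ wm ξ * c^2 := by positivity
          linarith [key b, key c]

theorem Nf_add_le {F G : R2 → ℂ} (hF : WL2 F) (hG : WL2 G) :
    Nf (fun ξ => F ξ + G ξ) ≤ 2 * Nf F + 2 * Nf G := by
  unfold Nf
  rw [← integral_const_mul, ← integral_const_mul, ← integral_add (hF.2.const_mul _) (hG.2.const_mul _)]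
  apply integral_mono (hF.add hG).2 ((hF.2.const_mul _).add (hG.2.const_mul _))
  intro ξ
  have h1 := norm_add_le (F ξ) (G ξ)
  have h2 : ‖F ξ + G ξ‖^2 ≤ 2*‖F ξ‖^2 + 2*‖G ξ‖^2 := by
    have : ‖F ξ + G ξ‖^2 ≤ (‖F ξ‖ + ‖G ξ‖)^2 := by gcongr
    nlinarith [sq_nonneg (‖F ξ‖ - ‖G ξ‖)]
  have := mul_le_mul_of_nonneg_left h2 (wm_pos ξ).le
  simp only [Pi.add_apply]
  linarith

theorem dot_cv {G F1 F2 : R2 → ℂ} (hG : Fast G) (h1 : WL2 F1) (h2 : WL2 F2)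
    (hd : WL2 (dotFt F1 F2)) (ξ : R2) : dotFt (cv G F1) (cv G F2) ξ =
    (cv G (dotFt F1 F2) ξ + cv (fun ζ => (ζ 0 : ℂ) * G ζ) F1 ξ) + cv (fun ζ => (ζ 1 : ℂ) * G ζ) F2 ξ := by
  have i1 := cv_integrable hG h1 ξ
  have i2 := cv_integrable hG h2 ξ
  have i3 := cv_integrable hG hd ξ
  have i4 := cv_integrable (hG.coord_mul 0) h1 ξ
  have i5 := cv_integrable (hG.coord_mul 1) h2 ξ
  unfold dotFt cv at *
  rw [← integral_const_mul, ← integral_const_mul, ← integral_add (i1.const_mul _) (i2.const_mul _),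
    ← integral_add i3 i4]
  refine Eq.trans ?_ (integral_add (i3.add i4) i5)
  congr 1
  ext η
  simp
  ring

theorem dot_cv_WL2 {G : R2 → ℂ} (hG : Fast G) : ∃ C > 0, ∀ F1 F2, WL2 F1 → WL2 F2 →
    WL2 (dotFt F1 F2) → WL2 (dotFt (cv G F1) (cv G F2)) ∧
      Nf (dotFt (cv G F1) (cv G F2)) ≤ C * (Nf F1 + Nf F2 + Nf (dotFt F1 F2)) := by
  obtain ⟨C, hC, h⟩ := cv_WL2 hG
  obtain ⟨C0, hC0, h0⟩ := cv_WL2 (hG.coord_mul 0)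
  obtain ⟨C1, hC1, h1⟩ := cv_WL2 (hG.coord_mul 1)
  refine ⟨4*C+4*C0+2*C1, by positivity, ?_⟩
  intro F1 F2 hF1 hF2 hd
  have e : dotFt (cv G F1) (cv G F2) = fun ξ => (cv G (dotFt F1 F2) ξ + cv (fun ζ => (ζ 0 : ℂ) * G ζ) F1 ξ) + cv (fun ζ => (ζ 1 : ℂ) * G ζ) F2 ξ := by
    ext ξ; exact dot_cv hG hF1 hF2 hd ξ
  rw [e]
  obtain ⟨a1, a2⟩ := h _ hd
  obtain ⟨b1, b2⟩ := h0 _ hF1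
  obtain ⟨c1, c2⟩ := h1 _ hF2
  refine ⟨(a1.add b1).add c1, ?_⟩
  have n1 := Nf_add_le (a1.add b1) c1
  have n2 := Nf_add_le a1 b1
  have p1 := Nf_nonneg F1
  have p2 := Nf_nonneg F2
  have p3 := Nf_nonneg (dotFt F1 F2)
  have : 4*(C * Nf (dotFt F1 F2)) + 4*(C0 * Nf F1) + 2*(C1*Nf F2) ≤ (4*C+4*C0+2*C1) * (Nf F1 + Nf F2 + Nf (dotFt F1 F2)) := by
    nlinarith [mul_nonneg hC.le p1, mul_nonneg hC.le p2, mul_nonneg hC0.le p2, mul_nonneg hC0.le p3, mul_nonneg hC1.le p1, mul_nonneg hC1.le p3]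
  linarith

def qk (θ A1 A2 : R2 → ℂ) (ξ : R2) : ℂ := Kk θ 1 ξ * A1 ξ - Kk θ 0 ξ * A2 ξ

theorem qk_bound {θ : R2 → ℂ} (hθ : IsTest θ) : ∃ C : ℝ, 0 < C ∧ ∀ A1 A2 ξ,
    ‖qk θ A1 A2 ξ‖ ≤ C * (1 + ‖ξ‖)⁻¹ * (‖A1 ξ‖ + ‖A2 ξ‖) := by
  obtain ⟨C0, hC0, h0⟩ := Kk_bound hθ 0
  obtain ⟨C1, hC1, h1⟩ := Kk_bound hθ 1
  refine ⟨C0 + C1, by positivity, fun A1 A2 ξ => ?_⟩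
  unfold qk
  refine (norm_sub_le _ _).trans ?_
  rw [norm_mul, norm_mul]
  have a1 := mul_le_mul_of_nonneg_right (h1 ξ) (norm_nonneg (A1 ξ))
  have a2 := mul_le_mul_of_nonneg_right (h0 ξ) (norm_nonneg (A2 ξ))
  have p1 : 0 ≤ C0 * (1+‖ξ‖)⁻¹ * ‖A1 ξ‖ := by positivity
  have p2 : 0 ≤ C1 * (1+‖ξ‖)⁻¹ * ‖A2 ξ‖ := by positivity
  nlinarith

theorem S_bound {θ : R2 → ℂ} (hθ : IsTest θ) (h1 : testFT θ 0 = 1) :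
    ∃ C : ℝ, 0 < C ∧ ∀ A1 A2 ξ,
    ‖curlFt A1 A2 ξ - Complex.I * ((‖ξ‖^2 : ℝ) : ℂ) * qk θ A1 A2 ξ‖
      ≤ C * (‖ξ‖ * (1 + ‖ξ‖)⁻¹) * (‖A1 ξ‖ + ‖A2 ξ‖ + ‖dotFt A1 A2 ξ‖) := by
  obtain ⟨C0, hC0, h0⟩ := Kk_bound hθ 0
  obtain ⟨C1, hC1, h1'⟩ := Kk_bound hθ 1
  obtain ⟨C2, hC2, h2⟩ := (testFT_fast hθ).2 1
  refine ⟨C0 + C1 + C2, by positivity, fun A1 A2 ξ => ?_⟩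
  have e : curlFt A1 A2 ξ - Complex.I * ((‖ξ‖^2 : ℝ) : ℂ) * qk θ A1 A2 ξ
      = testFT θ (-ξ) * curlFt A1 A2 ξ + Complex.I * dotFt A1 A2 ξ * curlFt (Kk θ 0) (Kk θ 1) ξ := by
    have hd := Kk_div hθ ξ
    rw [h1] at hd
    have hd' : testFT θ (-ξ) = 1 - I * ((ξ 0 : ℂ) * Kk θ 0 ξ + (ξ 1 : ℂ) * Kk θ 1 ξ) := by
      rw [hd]; ring
    rw [hd', norm_sq_coord]
    unfold curlFt dotFt qk
    push_cast
    ring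
  rw [e]
  refine (norm_add_le _ _).trans ?_
  rw [norm_mul, norm_mul, norm_mul, Complex.norm_I, one_mul]
  have b1 := curl_le A1 A2 ξ
  have b2 := curl_le (Kk θ 0) (Kk θ 1) ξ
  have b3 : ‖testFT θ (-ξ)‖ ≤ C2 * (1+‖ξ‖)⁻¹ := by simpa using h2 (-ξ)
  have b4 : ‖curlFt (Kk θ 0) (Kk θ 1) ξ‖ ≤ ‖ξ‖ * (C0 * (1+‖ξ‖)⁻¹ + C1 * (1+‖ξ‖)⁻¹) :=
    b2.trans (mul_le_mul_of_nonneg_left (add_le_add (h0 ξ) (h1' ξ)) (norm_nonneg _))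
  set m := ‖ξ‖ * (1+‖ξ‖)⁻¹
  have hm : 0 ≤ m := by positivity
  set s := ‖A1 ξ‖ + ‖A2 ξ‖
  have hs : 0 ≤ s := by positivity
  set d := ‖dotFt A1 A2 ξ‖
  have hd : 0 ≤ d := norm_nonneg _
  calc _ ≤ (C2 * (1+‖ξ‖)⁻¹) * (‖ξ‖ * s) + d * (‖ξ‖ * (C0 * (1+‖ξ‖)⁻¹ + C1 * (1+‖ξ‖)⁻¹)) := by gcongr
    _ = C2 * m * s + (C0 + C1) * m * d := by ring
    _ ≤ _ := by
      have p1 : 0 ≤ (C0 + C1) * m * s := by positivity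
      have p2 : 0 ≤ C2 * m * d := by positivity
      nlinarith

theorem KA_WL2 {θ A : R2 → ℂ} (hθ : IsTest θ) (i : Fin 2) (hA : WL2 A) :
    WL2 (fun ξ => Kk θ i ξ * A ξ) := by
  obtain ⟨C, hC, h⟩ := Kk_bound hθ i
  have hc := Kk_continuous hθ i
  have hA1 := hA.1
  have hw := wm_continuous
  refine ⟨by fun_prop, (hA.2.const_mul (C^2)).mono' (by fun_prop) (ae_of_all _ fun ξ => ?_)⟩
  have hw0 := wm_pos ξ
  rw [Real.norm_of_nonneg (by positivity), norm_mul, mul_pow]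
  have : ‖Kk θ i ξ‖ ≤ C := by
    refine (h ξ).trans (mul_le_of_le_one_right hC.le ?_)
    apply inv_le_one_of_one_le₀
    linarith [norm_nonneg ξ]
  calc wm ξ * (‖Kk θ i ξ‖^2 * ‖A ξ‖^2) ≤ wm ξ * (C^2 * ‖A ξ‖^2) := by gcongr
    _ = _ := by ring

theorem qk_continuous {θ A1 A2 : R2 → ℂ} (hθ : IsTest θ) (h1 : WL2 A1) (h2 : WL2 A2) :
    Continuous (qk θ A1 A2) := by
  have := (KA_WL2 hθ 1 h1).1
  have := (KA_WL2 hθ 0 h2).1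
  unfold qk
  fun_prop

theorem qk_integrable {θ A1 A2 : R2 → ℂ} (hθ : IsTest θ) (h1 : WL2 A1) (h2 : WL2 A2) :
    Integrable (fun ξ : R2 => ((1 : ℝ) + ‖ξ‖ ^ 2) ^ (1/2:ℝ) * ‖qk θ A1 A2 ξ‖ ^ 2) := by
  obtain ⟨C, hC, h⟩ := qk_bound hθ
  have hc := qk_continuous hθ h1 h2
  have hw := wm_continuous
  simp_rw [wm_half]
  refine ((h1.2.add h2.2).const_mul (2*C^2)).mono' ?_ (ae_of_all _ fun ξ => ?_)
  · refine Continuous.aestronglyMeasurable (Continuous.mul (Continuous.inv₀ hw fun ξ => (wm_pos ξ).ne') (by fun_prop))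
  have hw0 := wm_pos ξ
  rw [Real.norm_of_nonneg (by positivity)]
  have hb := h A1 A2 ξ
  have hil := inv_le_wm ξ
  have hpos : 0 < 1 + ‖ξ‖ := by positivity
  set a := ‖A1 ξ‖
  set b := ‖A2 ξ‖
  have h3 : ‖qk θ A1 A2 ξ‖ ≤ C * wm ξ * (a + b) := by
    refine hb.trans ?_
    gcongr
  calc (wm ξ)⁻¹ * ‖qk θ A1 A2 ξ‖^2 ≤ (wm ξ)⁻¹ * (C * wm ξ * (a+b))^2 := by gcongr
    _ = C^2 * wm ξ * (a+b)^2 := by field_simp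
    _ ≤ C^2 * wm ξ * (2*a^2+2*b^2) := by
      gcongr; nlinarith [sq_nonneg (a-b)]
    _ = _ := by simp only [Pi.add_apply, a, b]; ring

theorem qk_supp {Γ : Set R2} {χ θ F1 F2 φ : R2 → ℂ} (hχ : IsTest χ) (hθ : IsTest θ)
    (h1 : HT Γ F1) (h2 : HT Γ F2) (hφ : IsTest φ) (hs : tsupport φ ∩ closure Γ = ∅)
    (hc : ∀ y ∈ closure Γ, y ∈ tsupport χ → ∀ a, θ a ≠ 0 → ∀ t ∈ Set.Icc (0:ℝ) 1,
        y + t • a ∈ closure Γ) :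
    Integrable (fun ξ => qk θ (cv (gk χ) F1) (cv (gk χ) F2) ξ * testFT φ ξ) ∧
    ∫ ξ, qk θ (cv (gk χ) F1) (cv (gk χ) F2) ξ * testFT φ ξ = 0 := by
  obtain ⟨C, hC, hW⟩ := cv_WL2 (gk_fast hχ)
  have A1 := (hW F1 h1.1).1
  have A2 := (hW F2 h2.1).1
  have key : ∀ F, HT Γ F → ∀ i, ∫ ξ, Kk θ i ξ * cv (gk χ) F ξ * testFT φ ξ = 0 := by
    intro F hF i
    apply Kk_support hθ i (hW F hF.1).1 hφ
    intro a ha t ht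
    rw [pairing hχ (hφ.translate _) hF.1]
    apply hF.2 _ (hχ.mul (hφ.translate _))
    rw [Set.eq_empty_iff_forall_notMem]
    rintro y ⟨hy1, hy2⟩
    have m1 : y ∈ tsupport χ := tsupport_mul_subset_left hy1
    have m2 : y ∈ tsupport (fun x => φ (x + t • a)) := tsupport_mul_subset_right hy1
    have m3 : y + t • a ∈ tsupport φ := by
      have := tsupport_comp_subset_preimage φ (f := fun x : R2 => x + t • a) (by fun_prop)
      exact this m2
    have m4 := hc y hy2 m1 a ha t ht
    have : y + t • a ∈ tsupport φ ∩ closure Γ := ⟨m3, m4⟩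
    rw [hs] at this
    exact this
  have i1 := (KA_WL2 hθ 1 A1).integrable_mul (testFT_fast hφ)
  have i2 := (KA_WL2 hθ 0 A2).integrable_mul (testFT_fast hφ)
  have e : (fun ξ => qk θ (cv (gk χ) F1) (cv (gk χ) F2) ξ * testFT φ ξ) =
      fun ξ => Kk θ 1 ξ * cv (gk χ) F1 ξ * testFT φ ξ - Kk θ 0 ξ * cv (gk χ) F2 ξ * testFT φ ξ := by
    ext ξ; unfold qk; ring
  rw [e]
  refine ⟨i1.sub i2, ?_⟩
  rw [integral_sub i1 i2, key F1 h1 1, key F2 h2 0, sub_zero]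

theorem IsTest.sum {n : ℕ} {χ : Fin n → R2 → ℂ} (h : ∀ j, IsTest (χ j)) :
    IsTest (fun x => ∑ j, χ j x) := by
  refine ⟨ContDiff.sum fun j _ => (h j).1, ?_⟩
  refine HasCompactSupport.intro (K := ⋃ j, tsupport (χ j)) (isCompact_iUnion fun j => (h j).2) ?_
  intro x hx
  apply Finset.sum_eq_zero
  intro j _
  simp only [Set.mem_iUnion, not_exists] at hx
  exact image_eq_zero_of_notMem_tsupport (hx j)

theorem cv_gk_sum {n : ℕ} {χ : Fin n → R2 → ℂ} (h : ∀ j, IsTest (χ j)) {F : R2 → ℂ} (hF : WL2 F)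
    (ξ : R2) : cv (gk (fun x => ∑ j, χ j x)) F ξ = ∑ j, cv (gk (χ j)) F ξ := by
  have h1 : ∀ ζ, gk (fun x => ∑ j, χ j x) ζ = ∑ j, gk (χ j) ζ := by
    intro ζ
    unfold gk testFT
    rw [← Finset.mul_sum]
    congr 1
    rw [← integral_finsetSum]
    · congr 1; ext x; rw [Finset.mul_sum]
    · intro j _
      have := (h j).modulate ζ
      have := this.integrable
      simpa [rdot_neg_right] using this
  unfold cv
  rw [← integral_finsetSum _ (fun j _ => cv_integrable (gk_fast (h j)) hF ξ)]
  congr 1; ext η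
  rw [h1, Finset.sum_mul]

theorem qdata {Γ : Set R2} (hΓ : IsLipschitzDomain Γ) :
    ∃ C1 C2 C3 C4 : ℝ, 0 ≤ C1 ∧ 0 ≤ C2 ∧ 0 ≤ C3 ∧ 0 ≤ C4 ∧ ∀ F1 F2, HT Γ F1 → HT Γ F2 → WL2 (dotFt F1 F2) →
      ∃ (q : HTildeElt (1/2 : ℝ) Γ) (T2 : R2 → ℝ), (∀ ξ, 0 ≤ T2 ξ) ∧ Integrable (fun ξ => wm ξ * T2 ξ) ∧
        ∫ ξ, wm ξ * T2 ξ ≤ C1 * (Nf F1 + Nf F2 + Nf (dotFt F1 F2)) ∧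
        (∀ ξ, ‖q.ft ξ‖ ≤ C2 * (1 + ‖ξ‖) + C3 * (Nf F1 + Nf F2)) ∧
        ∀ ξ, ∀ f : ℝ, ‖curlFt F1 F2 ξ - Complex.I * ((‖ξ‖^2 : ℝ) : ℂ) * q.ft ξ‖ * f ≤
          C4 * (‖ξ‖ * (1 + ‖ξ‖)⁻¹) * (T2 ξ + f^2) := by
  obtain ⟨n, χ, θ, O, hχ, hθ, hθ1, hO, hΓO, hsum, hcone⟩ := cone_partition hΓ
  choose Cq hCq hq using fun j => qk_bound (hθ j)
  choose CS hCS hS using fun j => S_bound (hθ j) (hθ1 j)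
  choose CW hCW hW using fun j => cv_WL2 (gk_fast (hχ j))
  choose Cd hCd hd using fun j => dot_cv_WL2 (gk_fast (hχ j))
  choose Cb hCb hb using fun j => cv_bound (gk_fast (hχ j))
  refine ⟨∑ j, (CW j + Cd j), ∑ j, 2 * Cq j * Cb j, ∑ j, Cq j, ∑ j, CS j,
    Finset.sum_nonneg fun j _ => (add_pos (hCW j) (hCd j)).le,
    Finset.sum_nonneg fun j _ => by have := hCq j; have := hCb j; positivity,
    Finset.sum_nonneg fun j _ => (hCq j).le, Finset.sum_nonneg fun j _ => (hCS j).le, ?_⟩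
  intro F1 F2 h1 h2 hdot
  set A1 : Fin n → R2 → ℂ := fun j => cv (gk (χ j)) F1 with hA1
  set A2 : Fin n → R2 → ℂ := fun j => cv (gk (χ j)) F2 with hA2
  have W1 : ∀ j, WL2 (A1 j) := fun j => (hW j F1 h1.1).1
  have W2 : ∀ j, WL2 (A2 j) := fun j => (hW j F2 h2.1).1
  have Wd : ∀ j, WL2 (dotFt (A1 j) (A2 j)) := fun j => (hd j F1 F2 h1.1 h2.1 hdot).1
  have r1 : ∀ ξ, F1 ξ = ∑ j, A1 j ξ := by
    intro ξ
    rw [← cv_gk_sum hχ h1.1, reproducing (IsTest.sum hχ) h1 hO hΓO hsum]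
  have r2 : ∀ ξ, F2 ξ = ∑ j, A2 j ξ := by
    intro ξ
    rw [← cv_gk_sum hχ h2.1, reproducing (IsTest.sum hχ) h2 hO hΓO hsum]
  have p1 := Nf_nonneg F1
  have p2 := Nf_nonneg F2
  have p3 := Nf_nonneg (dotFt F1 F2)
  let Q : HTildeElt (1/2 : ℝ) Γ :=
    { ft := fun ξ => ∑ j, qk (θ j) (A1 j) (A2 j) ξ
      cont := continuous_finsetSum _ fun j _ => qk_continuous (hθ j) (W1 j) (W2 j)
      mem := by
        have hi := integrable_finsetSum Finset.univ fun j _ => qk_integrable (hθ j) (W1 j) (W2 j)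
        refine (hi.const_mul (n:ℝ)).mono' ?_ (ae_of_all _ fun ξ => ?_)
        · have hc : Continuous (fun ξ => ∑ j, qk (θ j) (A1 j) (A2 j) ξ) :=
            continuous_finsetSum _ fun j _ => qk_continuous (hθ j) (W1 j) (W2 j)
          have hw := wm_continuous
          simp_rw [wm_half]
          exact Continuous.aestronglyMeasurable (Continuous.mul (Continuous.inv₀ hw fun ξ => (wm_pos ξ).ne') (by fun_prop))
        · rw [Real.norm_of_nonneg (by positivity), ← Finset.mul_sum]
          have : ‖∑ j, qk (θ j) (A1 j) (A2 j) ξ‖^2 ≤ n * ∑ j, ‖qk (θ j) (A1 j) (A2 j) ξ‖^2 := by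
            calc _ ≤ (∑ j, ‖qk (θ j) (A1 j) (A2 j) ξ‖)^2 := by
                  gcongr; exact norm_sum_le _ _
              _ ≤ _ := by
                have := sq_sum_le_card_mul_sum_sq (s := Finset.univ) (f := fun j => ‖qk (θ j) (A1 j) (A2 j) ξ‖)
                simpa using this
          calc _ ≤ ((1 : ℝ) + ‖ξ‖ ^ 2) ^ (1/2:ℝ) * (n * ∑ j, ‖qk (θ j) (A1 j) (A2 j) ξ‖^2) := by gcongr
            _ = _ := by ring
      supp := by
        intro φ hφ1 hφ2 hφ3
        have hs := fun j => qk_supp (hχ j) (hθ j) h1 h2 ⟨hφ1, hφ2⟩ hφ3 (hcone j)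
        simp_rw [Finset.sum_mul]
        rw [integral_finsetSum _ (fun j _ => (hs j).1)]
        exact Finset.sum_eq_zero fun j _ => (hs j).2 }
  refine ⟨Q, fun ξ => ∑ j, (‖A1 j ξ‖^2 + ‖A2 j ξ‖^2 + ‖dotFt (A1 j) (A2 j) ξ‖^2), ?_, ?_, ?_, ?_, ?_⟩
  · intro ξ; positivity
  · simp_rw [Finset.mul_sum, mul_add]
    exact integrable_finsetSum _ fun j _ => ((W1 j).2.add (W2 j).2).add (Wd j).2
  · have ii : ∀ j, Integrable (fun ξ => wm ξ * ‖A1 j ξ‖^2 + wm ξ * ‖A2 j ξ‖^2 +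
        wm ξ * ‖dotFt (A1 j) (A2 j) ξ‖^2) := fun j => ((W1 j).2.add (W2 j).2).add (Wd j).2
    rw [Finset.sum_mul]
    simp_rw [Finset.mul_sum, mul_add (wm _)]
    rw [integral_finsetSum _ fun j _ => ii j]
    apply Finset.sum_le_sum
    intro j _
    have e1 : ∫ ξ, (wm ξ * ‖A1 j ξ‖^2 + wm ξ * ‖A2 j ξ‖^2 + wm ξ * ‖dotFt (A1 j) (A2 j) ξ‖^2)
        = Nf (A1 j) + Nf (A2 j) + Nf (dotFt (A1 j) (A2 j)) := by
      refine (integral_add ((W1 j).2.add (W2 j).2) (Wd j).2).trans ?_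
      refine congrArg (· + Nf (dotFt (A1 j) (A2 j))) ?_
      exact integral_add (W1 j).2 (W2 j).2
    rw [e1]
    have n1 := (hW j F1 h1.1).2
    have n2 := (hW j F2 h2.1).2
    have n3 := (hd j F1 F2 h1.1 h2.1 hdot).2
    have := mul_nonneg (hCW j).le p3
    simp only [hA1, hA2]
    linarith
  · intro ξ
    show ‖∑ j, qk (θ j) (A1 j) (A2 j) ξ‖ ≤ _
    rw [Finset.sum_mul, Finset.sum_mul, ← Finset.sum_add_distrib]
    refine (norm_sum_le _ _).trans (Finset.sum_le_sum fun j _ => ?_)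
    have b1 := hb j F1 h1.1 ξ
    have b2 := hb j F2 h2.1 ξ
    have hc := hCq j
    calc _ ≤ Cq j * (1+‖ξ‖)⁻¹ * (‖A1 j ξ‖ + ‖A2 j ξ‖) := hq j _ _ ξ
      _ ≤ Cq j * 1 * ((Cb j * (1+‖ξ‖) + Nf F1) + (Cb j * (1+‖ξ‖) + Nf F2)) := by
        gcongr
        apply inv_le_one_of_one_le₀
        linarith [norm_nonneg ξ]
      _ = _ := by ring
  · intro ξ f
    set m := ‖ξ‖ * (1+‖ξ‖)⁻¹ with hm
    have hm0 : 0 ≤ m := by positivity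
    set T := ∑ j, (‖A1 j ξ‖^2 + ‖A2 j ξ‖^2 + ‖dotFt (A1 j) (A2 j) ξ‖^2) with hT
    have hT0 : 0 ≤ T := by positivity
    have e : curlFt F1 F2 ξ - Complex.I * ((‖ξ‖^2 : ℝ) : ℂ) * Q.ft ξ
        = ∑ j, (curlFt (A1 j) (A2 j) ξ - Complex.I * ((‖ξ‖^2 : ℝ) : ℂ) * qk (θ j) (A1 j) (A2 j) ξ) := by
      show curlFt F1 F2 ξ - Complex.I * ((‖ξ‖^2 : ℝ) : ℂ) * ∑ j, qk (θ j) (A1 j) (A2 j) ξ = _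
      unfold curlFt
      rw [r1, r2]
      simp only [Finset.mul_sum, Finset.sum_sub_distrib]
    rw [e]
    rcases le_or_gt f 0 with hf | hf
    · have l : ‖∑ j, (curlFt (A1 j) (A2 j) ξ - Complex.I * ((‖ξ‖^2 : ℝ) : ℂ) * qk (θ j) (A1 j) (A2 j) ξ)‖ * f ≤ 0 :=
        mul_nonpos_of_nonneg_of_nonpos (norm_nonneg _) hf
      refine l.trans ?_
      have : 0 ≤ ∑ j, CS j := Finset.sum_nonneg fun j _ => (hCS j).le
      positivity
    refine (mul_le_mul_of_nonneg_right (norm_sum_le _ _) hf.le).trans ?_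
    rw [Finset.sum_mul, Finset.sum_mul, Finset.sum_mul]
    apply Finset.sum_le_sum
    intro j _
    have hc := hCS j
    have tj : ‖A1 j ξ‖^2 + ‖A2 j ξ‖^2 + ‖dotFt (A1 j) (A2 j) ξ‖^2 ≤ T :=
      Finset.single_le_sum (f := fun j => ‖A1 j ξ‖^2 + ‖A2 j ξ‖^2 + ‖dotFt (A1 j) (A2 j) ξ‖^2)
        (fun j _ => by positivity) (Finset.mem_univ j)
    calc _ ≤ (CS j * m * (‖A1 j ξ‖ + ‖A2 j ξ‖ + ‖dotFt (A1 j) (A2 j) ξ‖)) * f := by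
          apply mul_le_mul_of_nonneg_right (hS j _ _ ξ) hf.le
      _ = CS j * m * ((‖A1 j ξ‖ + ‖A2 j ξ‖ + ‖dotFt (A1 j) (A2 j) ξ‖) * f) := by ring
      _ ≤ CS j * m * (T + f^2) := by
        gcongr
        nlinarith [sq_nonneg (‖A1 j ξ‖ - f/2), sq_nonneg (‖A2 j ξ‖ - f/2), sq_nonneg (‖dotFt (A1 j) (A2 j) ξ‖ - f/2)]

def Good (Γ : Set R2) (k : ℝ) (F1 F2 : R2 → ℂ) : Prop :=
  HT Γ F1 ∧ HT Γ F2 ∧ WL2 (dotFt F1 F2) ∧ ∀ q : HTildeElt (1/2 : ℝ) Γ,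
    ∫ ξ, Complex.I * g0hat k ξ * q.ft ξ * starRingEnd ℂ (curlFt F1 F2 ξ) = 0

theorem far_est (k : ℝ) (hk : 0 < k) (R : ℝ) (hR : 2*k+1 ≤ R) (F1 F2 : R2 → ℂ) (q : ℂ) (ξ : R2)
    (hξ : R < ‖ξ‖) (C T : ℝ) (hC : 0 ≤ C) (hT : 0 ≤ T)
    (h : ∀ f : ℝ, ‖curlFt F1 F2 ξ - Complex.I * ((‖ξ‖^2 : ℝ) : ℂ) * q‖ * f ≤
          C * (‖ξ‖ * (1 + ‖ξ‖)⁻¹) * (T + f^2)) :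
    wm ξ * ‖F1 ξ‖^2 + wm ξ * ‖F2 ξ‖^2 ≤
      (Complex.I * g0hat k ξ * q * starRingEnd ℂ (curlFt F1 F2 ξ)).re +
      1/R * (wm ξ * ‖dotFt F1 F2 ξ‖^2 + 2*C*(wm ξ * T + 2*(wm ξ * ‖F1 ξ‖^2 + wm ξ * ‖F2 ξ‖^2))) := by
  have hR1 : 1 ≤ R := by linarith
  have hr1 : 1 ≤ ‖ξ‖ := by linarith
  have hr0 : 0 < ‖ξ‖ := by linarith
  have hw := wm_pos ξ
  have hg := g0_le k hk ξ (by linarith)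
  have hgr := g0_re_ge k hk ξ (by linarith)
  have hsq := dot_curl_sq F1 F2 ξ
  have hcl := curl_le F1 F2 ξ
  set c := curlFt F1 F2 ξ
  set d := dotFt F1 F2 ξ
  set r := ‖ξ‖
  set w := wm ξ
  set S := c - Complex.I * ((r^2 : ℝ) : ℂ) * q with hS
  set f := ‖F1 ξ‖ + ‖F2 ξ‖ with hf
  have hf0 : 0 ≤ f := by positivity
  have hf2 : f^2 ≤ 2 * (‖F1 ξ‖^2 + ‖F2 ξ‖^2) := by
    nlinarith [sq_nonneg (‖F1 ξ‖ - ‖F2 ξ‖)]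
  have hrc : ((r^2:ℝ):ℂ) ≠ 0 := by exact_mod_cast (by positivity : (r^2:ℝ) ≠ 0)
  have hD : Complex.I * g0hat k ξ * q * starRingEnd ℂ c
      = g0hat k ξ * ((‖c‖^2 / r^2 : ℝ) : ℂ) - g0hat k ξ * S * starRingEnd ℂ c / ((r^2:ℝ):ℂ) := by
    have hcc : c * starRingEnd ℂ c = ((‖c‖^2:ℝ):ℂ) := by
      rw [Complex.mul_conj, Complex.normSq_eq_norm_sq]
    rw [Complex.ofReal_div, ← hcc, hS]
    field_simp
    ring
  have hre : (Complex.I * g0hat k ξ * q * starRingEnd ℂ c).re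
      = (g0hat k ξ).re * (‖c‖^2/r^2) - (g0hat k ξ * S * starRingEnd ℂ c / ((r^2:ℝ):ℂ)).re := by
    rw [hD, Complex.sub_re, Complex.re_mul_ofReal]
  have hE : (g0hat k ξ * S * starRingEnd ℂ c / ((r^2:ℝ):ℂ)).re ≤ 1/R * (2*C*(w*T+ w * f^2)) := by
    refine (Complex.re_le_norm _).trans ?_
    rw [norm_div, norm_mul, norm_mul, RCLike.norm_conj, Complex.norm_real, Real.norm_of_nonneg (by positivity)]
    have hh := h f
    calc ‖g0hat k ξ‖ * ‖S‖ * ‖c‖ / r^2 ≤ (2*w) * ‖S‖ * (r * f) / r^2 := by gcongr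
      _ = (2*w) * r⁻¹ * (‖S‖ * f) := by field_simp
      _ ≤ (2*w) * r⁻¹ * (C * (r * (1+r)⁻¹) * (T + f^2)) := by gcongr
      _ = (1+r)⁻¹ * (2*C*(w*T+ w * f^2)) := by field_simp
      _ ≤ 1/R * (2*C*(w*T+ w * f^2)) := by
        rw [one_div]
        gcongr
        linarith
  have hN : w * ‖F1 ξ‖^2 + w * ‖F2 ξ‖^2 = w * (‖d‖^2/r^2) + w * (‖c‖^2/r^2) := by
    have : ‖F1 ξ‖^2 + ‖F2 ξ‖^2 = ‖d‖^2/r^2 + ‖c‖^2/r^2 := by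
      rw [← add_div, hsq]; field_simp
    rw [← mul_add, this, mul_add]
  have h1 : w * (‖c‖^2/r^2) ≤ (g0hat k ξ).re * (‖c‖^2/r^2) := by gcongr
  have h2 : w * (‖d‖^2/r^2) ≤ 1/R * (w * ‖d‖^2) := by
    have : (r^2)⁻¹ ≤ R⁻¹ := by
      apply inv_anti₀ (by linarith)
      nlinarith
    calc w * (‖d‖^2/r^2) = (r^2)⁻¹ * (w*‖d‖^2) := by field_simp
      _ ≤ R⁻¹ * (w*‖d‖^2) := by gcongr
      _ = _ := by rw [one_div]
  have h3 : 1/R * (2*C*(w*T+ w * f^2)) ≤ 1/R * (2*C*(w * T + 2*(w * ‖F1 ξ‖^2 + w * ‖F2 ξ‖^2))) := by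
    have := mul_le_mul_of_nonneg_left hf2 hw.le
    have : w*T+ w * f^2 ≤ w * T + 2*(w * ‖F1 ξ‖^2 + w * ‖F2 ξ‖^2) := by linarith
    gcongr
  rw [hre, mul_add]
  linarith

theorem main_est {Γ : Set R2} (hΓ : IsLipschitzDomain Γ) (k : ℝ) (hk : 0 < k) (M : ℝ) (hM : 0 ≤ M) :
    ∃ C : ℝ, 0 ≤ C ∧ ∀ R : ℝ, 2*k+1 ≤ R → ∃ CR : ℝ, 0 ≤ CR ∧ ∀ F1 F2, Good Γ k F1 F2 →
      Nf F1 + Nf F2 + Nf (dotFt F1 F2) ≤ M → ∀ δ : ℝ, 0 ≤ δ → δ ≤ 1 →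
      (∀ ξ, ‖ξ‖ ≤ R → ‖F1 ξ‖ ≤ δ ∧ ‖F2 ξ‖ ≤ δ) → Nf F1 + Nf F2 ≤ C / R + CR * δ := by
  obtain ⟨C1, C2, C3, C4, hC1, hC2, hC3, hC4, hq⟩ := qdata hΓ
  refine ⟨M + 2*C4*(C1*M + 2*M), by positivity, fun R hR => ?_⟩
  have hR1 : 1 ≤ R := by linarith
  set K := 2 * R * (C2*(1+R) + C3*M) with hK
  have hK0 : 0 ≤ K := by positivity
  set ind : R2 → ℝ := (Metric.closedBall (0:R2) R).indicator (fun ξ => 2 + K * ‖g0hat k ξ‖) with hind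
  have hindi : Integrable ind := by
    rw [hind, integrable_indicator_iff measurableSet_closedBall]
    apply Integrable.add
    · exact integrableOn_const (by exact measure_closedBall_lt_top.ne)
    · exact (g0_integrableOn k R hk).norm.const_mul K
  have hind0 : ∀ ξ, 0 ≤ ind ξ := fun ξ => Set.indicator_nonneg (fun ξ _ => by positivity) ξ
  refine ⟨∫ ξ, ind ξ, integral_nonneg hind0, ?_⟩
  rintro F1 F2 ⟨h1, h2, hd, hE⟩ hN δ hδ0 hδ1 hsmall
  obtain ⟨q, T2, hT0, hTi, hTN, hqb, hS⟩ := hq F1 F2 h1 h2 hd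
  have n1 := Nf_nonneg F1
  have n2 := Nf_nonneg F2
  have n3 := Nf_nonneg (dotFt F1 F2)
  set D : R2 → ℂ := fun ξ => Complex.I * g0hat k ξ * q.ft ξ * starRingEnd ℂ (curlFt F1 F2 ξ) with hDd
  have hDi : Integrable D := B_integrable k hk q.cont q.mem h1.1 h2.1
  have hDre : ∫ ξ, (D ξ).re = 0 := by
    have := integral_re hDi
    simp only [RCLike.re_to_complex] at this
    rw [this, hE q]; simp
  set W : R2 → ℝ := fun ξ => wm ξ * ‖dotFt F1 F2 ξ‖^2 + 2*C4*(wm ξ * T2 ξ + 2*(wm ξ * ‖F1 ξ‖^2 + wm ξ * ‖F2 ξ‖^2)) with hWd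
  have i12 : Integrable (fun ξ => wm ξ * ‖F1 ξ‖^2 + wm ξ * ‖F2 ξ‖^2) := h1.1.2.add h2.1.2
  have i12' : Integrable (fun ξ => 2*(wm ξ * ‖F1 ξ‖^2 + wm ξ * ‖F2 ξ‖^2)) := i12.const_mul 2
  have iT : Integrable (fun ξ => wm ξ * T2 ξ + 2*(wm ξ * ‖F1 ξ‖^2 + wm ξ * ‖F2 ξ‖^2)) := hTi.add i12'
  have hWi : Integrable W := hd.2.add (iT.const_mul _)
  have hN12 : ∫ ξ, (wm ξ * ‖F1 ξ‖^2 + wm ξ * ‖F2 ξ‖^2) = Nf F1 + Nf F2 := integral_add h1.1.2 h2.1.2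
  have hWN : ∫ ξ, W ξ ≤ M + 2*C4*(C1*M + 2*M) := by
    have e : ∫ ξ, W ξ = Nf (dotFt F1 F2) + 2*C4*((∫ ξ, wm ξ * T2 ξ) + 2*(Nf F1 + Nf F2)) := by
      rw [hWd, integral_add hd.2 (iT.const_mul _), integral_const_mul, integral_add hTi i12', integral_const_mul, hN12]
      rfl
    rw [e]
    have : C1 * (Nf F1 + Nf F2 + Nf (dotFt F1 F2)) ≤ C1 * M := by gcongr
    gcongr
    · linarith
    · linarith
    · linarith
  have hpt : ∀ ξ, wm ξ * ‖F1 ξ‖^2 + wm ξ * ‖F2 ξ‖^2 ≤ (D ξ).re + (δ * ind ξ + 1/R * W ξ) := by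
    intro ξ
    have hw := wm_pos ξ
    have hT := hT0 ξ
    rcases le_or_gt ‖ξ‖ R with hξ | hξ
    · obtain ⟨s1, s2⟩ := hsmall ξ hξ
      have hi : ind ξ = 2 + K * ‖g0hat k ξ‖ := Set.indicator_of_mem (by simpa using hξ) _
      have hW0 : 0 ≤ 1/R * W ξ := by
        rw [hWd]; positivity
      have hqR : ‖q.ft ξ‖ ≤ C2*(1+R) + C3*M := by
        refine (hqb ξ).trans ?_
        gcongr
        linarith
      have hDn : ‖D ξ‖ ≤ δ * (K * ‖g0hat k ξ‖) := by
        simp only [hDd]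
        rw [norm_mul, norm_mul, norm_mul, Complex.norm_I, one_mul, RCLike.norm_conj]
        have hcl : ‖curlFt F1 F2 ξ‖ ≤ R * (δ + δ) := by
          refine (curl_le F1 F2 ξ).trans ?_
          gcongr
        calc _ ≤ ‖g0hat k ξ‖ * (C2*(1+R) + C3*M) * (R * (δ + δ)) := by gcongr
          _ = _ := by rw [hK]; ring
      have h5 := (abs_le.1 (Complex.abs_re_le_norm (D ξ))).1
      have hw1 := wm_le_one ξ
      have q1 : wm ξ * ‖F1 ξ‖^2 ≤ δ := by
        calc _ ≤ 1 * δ^2 := by gcongr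
          _ ≤ δ := by nlinarith
      have q2 : wm ξ * ‖F2 ξ‖^2 ≤ δ := by
        calc _ ≤ 1 * δ^2 := by gcongr
          _ ≤ δ := by nlinarith
      rw [hi, mul_add]
      linarith
    · have := far_est k hk R hR F1 F2 (q.ft ξ) ξ hξ C4 (T2 ξ) hC4 hT (hS ξ)
      have hi := mul_nonneg hδ0 (hind0 ξ)
      simp only [hDd, hWd]
      linarith
  have hu : Integrable (fun ξ => δ * ind ξ + 1/R * W ξ) := (hindi.const_mul δ).add (hWi.const_mul _)
  have hDri : Integrable (fun ξ => (D ξ).re) := hDi.re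
  have := integral_mono i12 (hDri.add hu) hpt
  rw [hN12] at this
  refine this.trans ?_
  have e2 : ∫ ξ, ((fun ξ => (D ξ).re) + (fun ξ => δ * ind ξ + 1/R * W ξ)) ξ
      = 0 + (δ * (∫ ξ, ind ξ) + 1/R * ∫ ξ, W ξ) := by
    refine (integral_add hDri hu).trans ?_
    rw [hDre, integral_add (hindi.const_mul δ) (hWi.const_mul _), integral_const_mul, integral_const_mul]
  have hRi : 0 ≤ R⁻¹ := by positivity
  have h6 := mul_le_mul_of_nonneg_left hWN hRi
  rw [e2, zero_add, one_div, div_eq_inv_mul, mul_comm δ]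
  linarith

theorem extract (u : ℕ → R2 → ℂ) (he : Equicontinuous u)
    (hb : ∀ ξ, ∃ B : ℝ, ∀ n, ‖u n ξ‖ ≤ B) :
    ∃ φ : ℕ → ℕ, StrictMono φ ∧ ∃ L : R2 → ℂ, Continuous L ∧
      ∀ K : Set R2, IsCompact K → TendstoUniformlyOn (fun n => u (φ n)) L atTop K := by
  choose B hB using hb
  have hset : (Set.range u).Equicontinuous := by
    rw [Set.Equicontinuous]
    rw [equicontinuous_iff_range] at he
    exact he
  have hcl := Set.Equicontinuous.closure hset
  have hcpt : IsCompact (closure (Set.range u)) := by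
    refine IsCompact.of_isClosed_subset (isCompact_univ_pi fun x => isCompact_closedBall (0:ℂ) (B x))
      isClosed_closure (closure_minimal ?_ (isCompact_univ_pi fun x => isCompact_closedBall (0:ℂ) (B x)).isClosed)
    rintro _ ⟨n, rfl⟩ x _
    simpa using hB x n
  let S : Set C(R2, ℂ) := {f | (f : R2 → ℂ) ∈ closure (Set.range u)}
  have hS1 : Set.image ContinuousMap.toFun S = closure (Set.range u) := by
    ext f
    constructor
    · rintro ⟨g, hg, rfl⟩; exact hg
    · intro hf
      exact ⟨⟨f, hcl.continuous ⟨f, hf⟩⟩, hf, rfl⟩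
  have hScpt : IsCompact S := by
    apply ArzelaAscoli.isCompact_of_equicontinuous S (by rw [hS1]; exact hcpt)
    have := Equicontinuous.comp hcl (fun f : S => (⟨(f : C(R2,ℂ)), f.2⟩ : closure (Set.range u)))
    exact this
  let U : ℕ → C(R2, ℂ) := fun n => ⟨u n, he.continuous n⟩
  obtain ⟨L, _, φ, hφ, hL⟩ := hScpt.tendsto_subseq (x := U) (fun n => subset_closure ⟨n, rfl⟩)
  refine ⟨φ, hφ, L, L.continuous, fun K hK => ?_⟩
  exact (ContinuousMap.tendsto_iff_forall_isCompact_tendstoUniformlyOn.1 hL) K hK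

theorem HT_of (Γ : Set R2) (f : HTildeElt (-(1/2) : ℝ) Γ) : HT Γ f.ft :=
  ⟨⟨f.cont, f.mem⟩, fun φ hφ hs => f.supp φ hφ.1 hφ.2 hs⟩

theorem HT.sub {Γ : Set R2} {F G : R2 → ℂ} (hF : HT Γ F) (hG : HT Γ G) :
    HT Γ (fun ξ => F ξ - G ξ) := by
  refine ⟨hF.1.sub hG.1, fun φ hφ hs => ?_⟩
  simp_rw [sub_mul]
  rw [integral_sub (hF.1.integrable_mul (testFT_fast hφ)) (hG.1.integrable_mul (testFT_fast hφ)),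
    hF.2 φ hφ hs, hG.2 φ hφ hs, sub_zero]

theorem dot_sub (F1 F2 G1 G2 : R2 → ℂ) : dotFt (fun ξ => F1 ξ - G1 ξ) (fun ξ => F2 ξ - G2 ξ)
    = fun ξ => dotFt F1 F2 ξ - dotFt G1 G2 ξ := by
  ext ξ; unfold dotFt; ring

theorem curl_sub (F1 F2 G1 G2 : R2 → ℂ) : curlFt (fun ξ => F1 ξ - G1 ξ) (fun ξ => F2 ξ - G2 ξ)
    = fun ξ => curlFt F1 F2 ξ - curlFt G1 G2 ξ := by
  ext ξ; unfold curlFt; ring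

theorem Good.sub {Γ : Set R2} {k : ℝ} (hk : 0 < k) {F1 F2 G1 G2 : R2 → ℂ} (hF : Good Γ k F1 F2)
    (hG : Good Γ k G1 G2) : Good Γ k (fun ξ => F1 ξ - G1 ξ) (fun ξ => F2 ξ - G2 ξ) := by
  refine ⟨hF.1.sub hG.1, hF.2.1.sub hG.2.1, ?_, fun q => ?_⟩
  · rw [dot_sub]; exact hF.2.2.1.sub hG.2.2.1
  · rw [curl_sub]
    simp_rw [map_sub, mul_sub]
    rw [integral_sub (B_integrable k hk q.cont q.mem hF.1.1 hF.2.1.1)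
      (B_integrable k hk q.cont q.mem hG.1.1 hG.2.1.1), hF.2.2.2 q, hG.2.2.2 q, sub_zero]

theorem Good_of {Γ : Set R2} {k : ℝ} (hk : 0 < k) (V : Xelt Γ)
    (hE : ∀ q : HTildeElt (1/2 : ℝ) Γ, Eform k q V = 0) : Good Γ k V.c1.ft V.c2.ft := by
  refine ⟨HT_of Γ V.c1, HT_of Γ V.c2, ⟨dot_continuous V.c1.cont V.c2.cont, V.divMem⟩, fun q => ?_⟩
  have h := hE q
  unfold Eform at h
  simp_rw [Bint_curl] at h
  rw [integral_const_mul] at h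
  rcases mul_eq_zero.1 h with h0 | h0
  · exfalso
    rw [neg_eq_zero, Complex.ofReal_eq_zero] at h0
    exact (pow_pos hk 2).ne' h0
  · exact h0

theorem wnormSq_eq (F : R2 → ℂ) : wnormSq (-(1/2)) F = ((2 * π) ^ 2)⁻¹ * Nf F := rfl

theorem Nf_bound {Γ : Set R2} (V : Xelt Γ) (M : ℝ) (h : XnormSq V ≤ M) :
    Nf V.c1.ft + Nf V.c2.ft + Nf (dotFt V.c1.ft V.c2.ft) ≤ (2*π)^2 * M := by
  unfold XnormSq HnormSq at h
  rw [wnormSq_eq, wnormSq_eq, wnormSq_eq] at h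
  have : Nf (divFt V) = Nf (dotFt V.c1.ft V.c2.ft) := by
    unfold Nf divFt; simp
  rw [this, ← mul_add, ← mul_add] at h
  have hp : 0 < (2*π)^2 := by positivity
  rwa [inv_mul_le_iff₀ hp] at h

/-- limit of HT elements -/
theorem HT_limit {Γ : Set R2} (u : ℕ → R2 → ℂ) (L : R2 → ℂ) (hL : Continuous L)
    (hu : ∀ n, HT Γ (u n)) (M C : ℝ) (hM : ∀ n, Nf (u n) ≤ M) (hC : 0 < C)
    (hb : ∀ n ξ, ‖u n ξ‖ ≤ C * (1 + ‖ξ‖)) (hlim : ∀ ξ, Tendsto (fun n => u n ξ) atTop (𝓝 (L ξ))) :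
    HT Γ L := by
  refine ⟨⟨hL, ?_⟩, fun φ hφ hs => ?_⟩
  · have hw := wm_continuous
    refine ⟨by fun_prop, ?_⟩
    have hfl := lintegral_liminf_le (u := atTop) (μ := (volume : Measure R2)) (f := fun n ξ => ‖wm ξ * ‖u n ξ‖^2‖ₑ) (fun n => by
      have := (hu n).1.1
      exact Continuous.measurable (by fun_prop))
    refine lt_of_le_of_lt ?_ (lt_of_le_of_lt hfl ?_)
    · apply lintegral_mono
      intro ξ
      have : Tendsto (fun n => ‖wm ξ * ‖u n ξ‖^2‖ₑ) atTop (𝓝 ‖wm ξ * ‖L ξ‖^2‖ₑ) :=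
        (((hlim ξ).norm.pow 2).const_mul (wm ξ)).enorm
      exact this.liminf_eq.ge
    · have : ∀ n, ∫⁻ ξ, ‖wm ξ * ‖u n ξ‖^2‖ₑ ≤ ENNReal.ofReal M := by
        intro n
        have e := ofReal_integral_norm_eq_lintegral_enorm (hu n).1.2
        rw [← e]
        apply ENNReal.ofReal_le_ofReal
        refine le_trans (le_of_eq ?_) (hM n)
        unfold Nf
        congr 1; ext ξ
        have := wm_pos ξ
        rw [Real.norm_of_nonneg (by positivity)]
      refine lt_of_le_of_lt (liminf_le_liminf (v := fun _ => ENNReal.ofReal M) (Eventually.of_forall this)) ?_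
      simp
  · have hF := testFT_fast hφ
    obtain ⟨C', hC', hd⟩ := hF.2 4
    have ht : Tendsto (fun n => ∫ ξ, u n ξ * testFT φ ξ) atTop (𝓝 (∫ ξ, L ξ * testFT φ ξ)) := by
      apply tendsto_integral_of_dominated_convergence (fun ξ => C * C' * ((1+‖ξ‖)^3)⁻¹)
      · intro n
        exact ((hu n).1.1.mul hF.1).aestronglyMeasurable
      · exact integrable_decay.const_mul _
      · intro n
        refine ae_of_all _ fun ξ => ?_
        rw [norm_mul]
        have h1 := hb n ξ
        have h2 := hd ξ
        have hp : 0 < 1 + ‖ξ‖ := by positivity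
        calc _ ≤ (C * (1+‖ξ‖)) * (C' * ((1+‖ξ‖)^4)⁻¹) := by gcongr
          _ = _ := by field_simp
      · exact ae_of_all _ fun ξ => (hlim ξ).mul_const _
    have hz : (fun n => ∫ ξ, u n ξ * testFT φ ξ) = fun _ => 0 := by
      ext n; exact (hu n).2 φ hφ hs
    rw [hz] at ht
    exact tendsto_nhds_unique ht tendsto_const_nhds

/-- Fatou for differences -/
theorem Nf_limit_le (u : ℕ → R2 → ℂ) (f L : R2 → ℂ) (hu : ∀ n, WL2 (u n)) (hf : WL2 f) (hL : WL2 L)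
    (hlim : ∀ ξ, Tendsto (fun n => u n ξ) atTop (𝓝 (L ξ))) (ε : ℝ) (hε : 0 ≤ ε) (N : ℕ)
    (h : ∀ n, N ≤ n → Nf (fun ξ => f ξ - u n ξ) ≤ ε) : Nf (fun ξ => f ξ - L ξ) ≤ ε := by
  have hw := wm_continuous
  have hfl := lintegral_liminf_le (u := atTop) (μ := (volume : Measure R2)) (f := fun n ξ => ‖wm ξ * ‖f ξ - u n ξ‖^2‖ₑ) (fun n => by
      have := (hu n).1
      have := hf.1
      exact Continuous.measurable (by fun_prop))
  have conv : ∀ G : R2 → ℂ, WL2 G → ∫⁻ ξ, ‖wm ξ * ‖G ξ‖^2‖ₑ = ENNReal.ofReal (Nf G) := by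
    intro G hG
    rw [← ofReal_integral_norm_eq_lintegral_enorm hG.2]
    congr 1
    unfold Nf
    congr 1; ext ξ
    have := wm_pos ξ
    rw [Real.norm_of_nonneg (by positivity)]
  have h1 : ENNReal.ofReal (Nf (fun ξ => f ξ - L ξ)) ≤ ENNReal.ofReal ε := by
    rw [← conv _ (hf.sub hL)]
    refine le_trans ?_ (hfl.trans ?_)
    · apply lintegral_mono
      intro ξ
      have : Tendsto (fun n => ‖wm ξ * ‖f ξ - u n ξ‖^2‖ₑ) atTop (𝓝 ‖wm ξ * ‖f ξ - L ξ‖^2‖ₑ) :=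
        ((((hlim ξ).const_sub (f ξ)).norm.pow 2).const_mul (wm ξ)).enorm
      exact this.liminf_eq.ge
    · have : ∀ᶠ n in atTop, ∫⁻ ξ, ‖wm ξ * ‖f ξ - u n ξ‖^2‖ₑ ≤ ENNReal.ofReal ε := by
        filter_upwards [eventually_ge_atTop N] with n hn
        rw [conv _ (hf.sub (hu n))]
        exact ENNReal.ofReal_le_ofReal (h n hn)
      refine (liminf_le_liminf (v := fun _ => ENNReal.ofReal ε) this).trans ?_
      simp
  exact (ENNReal.ofReal_le_ofReal_iff hε).1 h1

theorem reg {Γ : Set R2} (hΓ : IsLipschitzDomain Γ) (M : ℝ) (hM : 0 ≤ M) (u : ℕ → R2 → ℂ)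
    (hu : ∀ n, HT Γ (u n)) (hN : ∀ n, Nf (u n) ≤ M) :
    Equicontinuous u ∧ ∃ C, 0 < C ∧ ∀ n ξ, ‖u n ξ‖ ≤ C * (1 + ‖ξ‖) := by
  obtain ⟨n, χ, θ, O, hχ, -, -, hO, hΓO, h1, -⟩ := cone_partition hΓ
  have hs : IsTest (fun x => ∑ j, χ j x) := IsTest.sum hχ
  have hrep : ∀ n ξ, cv (gk (fun x => ∑ j, χ j x)) (u n) ξ = u n ξ := fun n =>
    reproducing hs (hu n) hO hΓO h1
  have hG := gk_fast hs
  constructor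
  · intro ξ₀
    obtain ⟨ρ, hρ, h⟩ := cv_equicont hG ξ₀
    refine equicont_est (N := M) hρ ?_
    intro i t ht ξ
    have := h (u i) (hu i).1 t ht ξ
    rw [hrep, hrep] at this
    refine this.trans ?_
    have := hN i
    gcongr
  · obtain ⟨C, hC, h⟩ := cv_bound hG
    refine ⟨C + M, by positivity, fun n ξ => ?_⟩
    have := h (u n) (hu n).1 ξ
    rw [hrep] at this
    have h2 := hN n
    have h3 : 0 ≤ M * ‖ξ‖ := by positivity
    nlinarith

theorem final (Γ : Set R2) (hΓ : IsLipschitzDomain Γ) (k : ℝ) (hk : 0 < k) (F1 F2 : ℕ → R2 → ℂ)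
    (hG : ∀ n, Good Γ k (F1 n) (F2 n)) (M : ℝ)
    (hbdd : ∀ n, Nf (F1 n) + Nf (F2 n) + Nf (dotFt (F1 n) (F2 n)) ≤ M) :
    ∃ φ : ℕ → ℕ, StrictMono φ ∧ ∃ L1 L2, HT Γ L1 ∧ HT Γ L2 ∧ ∀ ε, 0 < ε → ∃ N, ∀ n, N ≤ n →
      Nf (fun ξ => F1 (φ n) ξ - L1 ξ) ≤ ε ∧ Nf (fun ξ => F2 (φ n) ξ - L2 ξ) ≤ ε := by
  have p1 : ∀ n, 0 ≤ Nf (F1 n) := fun n => Nf_nonneg _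
  have p2 : ∀ n, 0 ≤ Nf (F2 n) := fun n => Nf_nonneg _
  have p3 : ∀ n, 0 ≤ Nf (dotFt (F1 n) (F2 n)) := fun n => Nf_nonneg _
  have hM : 0 ≤ M := by linarith [p1 0, p2 0, p3 0, hbdd 0]
  have b1 : ∀ n, Nf (F1 n) ≤ M := fun n => by linarith [p1 n, p2 n, p3 n, hbdd n]
  have b2 : ∀ n, Nf (F2 n) ≤ M := fun n => by linarith [p1 n, p2 n, p3 n, hbdd n]
  obtain ⟨e1, C1, hC1, c1⟩ := reg hΓ M hM F1 (fun n => (hG n).1) b1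
  obtain ⟨φ1, hφ1, L1, hL1, u1⟩ := extract F1 e1 (fun ξ => ⟨_, fun n => c1 n ξ⟩)
  obtain ⟨e2, C2, hC2, c2⟩ := reg hΓ M hM (fun n => F2 (φ1 n)) (fun n => (hG _).2.1) (fun n => b2 _)
  obtain ⟨φ2, hφ2, L2, hL2, u2⟩ := extract _ e2 (fun ξ => ⟨_, fun n => c2 n ξ⟩)
  have u1' : ∀ K : Set R2, IsCompact K →
      TendstoUniformlyOn (fun n => F1 (φ1 (φ2 n))) L1 atTop K := fun K hK =>
    fun s hs => hφ2.tendsto_atTop.eventually (u1 K hK s hs)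
  have l1 : ∀ ξ, Tendsto (fun n => F1 (φ1 (φ2 n)) ξ) atTop (𝓝 (L1 ξ)) := fun ξ =>
    (u1' {ξ} isCompact_singleton).tendsto_at rfl
  have l2 : ∀ ξ, Tendsto (fun n => F2 (φ1 (φ2 n)) ξ) atTop (𝓝 (L2 ξ)) := fun ξ =>
    (u2 {ξ} isCompact_singleton).tendsto_at rfl
  have H1 : HT Γ L1 := HT_limit (fun n => F1 (φ1 (φ2 n))) L1 hL1 (fun n => (hG _).1) M C1
    (fun n => b1 _) hC1 (fun n ξ => c1 _ ξ) l1
  have H2 : HT Γ L2 := HT_limit (fun n => F2 (φ1 (φ2 n))) L2 hL2 (fun n => (hG _).2.1) M C2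
    (fun n => b2 _) hC2 (fun n ξ => c2 _ ξ) l2
  refine ⟨fun n => φ1 (φ2 n), hφ1.comp hφ2, L1, L2, H1, H2, fun ε hε => ?_⟩
  obtain ⟨C, hC, h⟩ := main_est hΓ k hk (4 * M) (by positivity)
  obtain ⟨R, hR, hRC⟩ : ∃ R : ℝ, 2 * k + 1 ≤ R ∧ C / R ≤ ε / 2 := by
    refine ⟨max (2*k+1) (2 * C / ε), le_max_left _ _, ?_⟩
    have hp : 0 < max (2*k+1) (2 * C / ε) := lt_of_lt_of_le (by positivity) (le_max_left _ _)
    have := le_max_right (2*k+1) (2 * C / ε)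
    rw [div_le_iff₀ hε] at this
    rw [div_le_iff₀ hp]
    linarith
  obtain ⟨CR, hCR, h⟩ := h R hR
  obtain ⟨δ, hδ, hδ1, hδC⟩ : ∃ δ : ℝ, 0 < δ ∧ δ ≤ 1 ∧ CR * δ ≤ ε / 2 := by
    refine ⟨min 1 (ε / 2 / (CR + 1)), by positivity, min_le_left _ _, ?_⟩
    calc CR * min 1 (ε / 2 / (CR + 1)) ≤ (CR + 1) * (ε / 2 / (CR + 1)) := by
          gcongr
          · linarith
          · exact min_le_right _ _
      _ = ε / 2 := by field_simp
  have v1 := Metric.tendstoUniformlyOn_iff.1 (u1' _ (isCompact_closedBall (0:R2) R)) (δ/2) (by positivity)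
  have v2 := Metric.tendstoUniformlyOn_iff.1 (u2 _ (isCompact_closedBall (0:R2) R)) (δ/2) (by positivity)
  obtain ⟨N, hN⟩ := eventually_atTop.1 (v1.and v2)
  have key : ∀ n, N ≤ n → ∀ m, N ≤ m →
      Nf (fun ξ => F1 (φ1 (φ2 n)) ξ - F1 (φ1 (φ2 m)) ξ) +
      Nf (fun ξ => F2 (φ1 (φ2 n)) ξ - F2 (φ1 (φ2 m)) ξ) ≤ ε := by
    intro n hn m hm
    have g := (hG (φ1 (φ2 n))).sub hk (hG (φ1 (φ2 m)))
    have := h _ _ g ?_ δ hδ.le hδ1 ?_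
    · linarith
    · rw [dot_sub]
      have a1 := Nf_sub_le (hG (φ1 (φ2 n))).1.1 (hG (φ1 (φ2 m))).1.1
      have a2 := Nf_sub_le (hG (φ1 (φ2 n))).2.1.1 (hG (φ1 (φ2 m))).2.1.1
      have a3 := Nf_sub_le (hG (φ1 (φ2 n))).2.2.1 (hG (φ1 (φ2 m))).2.2.1
      have a4 := hbdd (φ1 (φ2 n))
      have a5 := hbdd (φ1 (φ2 m))
      linarith
    · intro ξ hξ
      have hξ' : ξ ∈ Metric.closedBall (0:R2) R := by simpa using hξ
      have w1 := (hN n hn).1 ξ hξ'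
      have w2 := (hN n hn).2 ξ hξ'
      have w3 := (hN m hm).1 ξ hξ'
      have w4 := (hN m hm).2 ξ hξ'
      simp only [← dist_eq_norm]
      constructor
      · linarith [dist_triangle_left (F1 (φ1 (φ2 n)) ξ) (F1 (φ1 (φ2 m)) ξ) (L1 ξ)]
      · linarith [dist_triangle_left (F2 (φ1 (φ2 n)) ξ) (F2 (φ1 (φ2 m)) ξ) (L2 ξ)]
  refine ⟨N, fun n hn => ⟨?_, ?_⟩⟩
  · refine Nf_limit_le (fun m => F1 (φ1 (φ2 m))) _ L1 (fun m => (hG _).1.1) (hG _).1.1 H1.1 l1 ε hε.le N ?_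
    intro m hm
    linarith [key n hn m hm, Nf_nonneg (fun ξ => F2 (φ1 (φ2 n)) ξ - F2 (φ1 (φ2 m)) ξ)]
  · refine Nf_limit_le (fun m => F2 (φ1 (φ2 m))) _ L2 (fun m => (hG _).2.1.1) (hG _).2.1.1 H2.1 l2 ε hε.le N ?_
    intro m hm
    linarith [key n hn m hm, Nf_nonneg (fun ξ => F1 (φ1 (φ2 n)) ξ - F1 (φ1 (φ2 m)) ξ)]

/-- Lemma 3.4: the kernel `X₀ = {V ∈ X : E(q,V) = 0 ∀ q ∈ H̃^{1/2}(Γ)}`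
is compactly embedded in `H`: every sequence in `X₀` bounded in the `X`-norm has a
subsequence converging in the norm of `H`. -/
theorem statement7 (Γ : Set R2) (hΓ : IsLipschitzDomain Γ) (k : ℝ) (hk : 0 < k)
    (V : ℕ → Xelt Γ)
    (hE : ∀ n, ∀ q : HTildeElt (1/2 : ℝ) Γ, Eform k q (V n) = 0)
    (M : ℝ) (hbdd : ∀ n, XnormSq (V n) ≤ M) :
    ∃ φ : ℕ → ℕ, StrictMono φ ∧ ∃ L1 L2 : HTildeElt (-(1/2) : ℝ) Γ,
      Tendsto (fun n =>
          wnormSq (-(1/2)) (fun ξ => (V (φ n)).c1.ft ξ - L1.ft ξ) +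
          wnormSq (-(1/2)) (fun ξ => (V (φ n)).c2.ft ξ - L2.ft ξ))
        atTop (𝓝 0) := by


  obtain ⟨φ, hφ, L1, L2, H1, H2, h⟩ := final Γ hΓ k hk (fun n => (V n).c1.ft) (fun n => (V n).c2.ft)
    (fun n => Good_of hk (V n) (hE n)) ((2 * π) ^ 2 * M) (fun n => Nf_bound (V n) M (hbdd n))
  refine ⟨φ, hφ, ⟨L1, H1.1.1, H1.1.2, fun f h1 h2 h3 => H1.2 f ⟨h1, h2⟩ h3⟩,
    ⟨L2, H2.1.1, H2.1.2, fun f h1 h2 h3 => H2.2 f ⟨h1, h2⟩ h3⟩, ?_⟩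
  simp only [wnormSq_eq]
  have key : ∀ L : R2 → ℂ, ∀ F : ℕ → R2 → ℂ,
      (∀ ε, 0 < ε → ∃ N, ∀ n, N ≤ n → Nf (fun ξ => F (φ n) ξ - L ξ) ≤ ε) →
      Tendsto (fun n => Nf (fun ξ => F (φ n) ξ - L ξ)) atTop (𝓝 0) := by
    intro L F hF
    rw [Metric.tendsto_atTop]
    intro ε hε
    obtain ⟨N, hN⟩ := hF (ε/2) (by positivity)
    refine ⟨N, fun n hn => ?_⟩
    rw [Real.dist_0_eq_abs, abs_of_nonneg (Nf_nonneg _)]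
    linarith [hN n hn]
  have t1 := key L1 (fun n => (V n).c1.ft) (fun ε hε => by
    obtain ⟨N, hN⟩ := h ε hε
    exact ⟨N, fun n hn => (hN n hn).1⟩)
  have t2 := key L2 (fun n => (V n).c2.ft) (fun ε hε => by
    obtain ⟨N, hN⟩ := h ε hε
    exact ⟨N, fun n hn => (hN n hn).2⟩)
  simpa using (t1.const_mul (((2 * π) ^ 2)⁻¹)).add (t2.const_mul (((2 * π) ^ 2)⁻¹))

end
end

section
/- For every W ∈ X, the imaginary part of B(W,W) equals −∫_{|ξ|<k} ( √(k²−|ξ|²) |a₁(ξ)|² + (k²/√(k²−|ξ|²)) |a₂(ξ)|² ) dξ. Consequently, if Im B(W,W) = 0 then Ŵ(ξ) = 0 for every ξ with |ξ| < k. -/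
noncomputable section

open MeasureTheory Complex Filter Topology
open scoped Real NNReal ContDiff

lemma aux_sing (k : ℝ) (hk : 0 < k) :
    IntegrableOn (fun ξ : R2 => 1 / Real.sqrt |‖ξ‖ ^ 2 - k ^ 2|) (Metric.ball 0 (2 * k)) := by
  have key : IntegrableOn (fun y : ℝ => y ^ (Module.finrank ℝ R2 - 1) •
      (1 / Real.sqrt |y ^ 2 - k ^ 2|)) (Set.Ioo 0 (2 * k)) := by
    have h0 : IntervalIntegrable (fun x : ℝ => x ^ (-(1/2) : ℝ)) volume (-k) k :=
      intervalIntegral.intervalIntegrable_rpow' (by norm_num)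
    have h1 := h0.comp_sub_right k
    have h2 := (h0.symm).comp_sub_left k
    have e1 : -k + k = 0 := by ring
    have e2 : k + k = 2 * k := by ring
    have e3 : k - k = 0 := by ring
    have e4 : k - -k = 2 * k := by ring
    rw [e1, e2] at h1
    rw [e3, e4] at h2
    have h3 := (h1.norm.add h2.norm).const_mul (2 * k / Real.sqrt k)
    rw [intervalIntegrable_iff_integrableOn_Ioo_of_le (by linarith)] at h3
    refine Integrable.mono' h3 ?_ ?_
    · exact Measurable.aestronglyMeasurable (by fun_prop)
    · refine (ae_restrict_iff' measurableSet_Ioo).2 (Eventually.of_forall fun y hy => ?_)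
      have hfr : Module.finrank ℝ R2 - 1 = 1 := by simp
      rw [hfr, pow_one, smul_eq_mul, Real.norm_of_nonneg (by have := hy.1; positivity)]
      have hkey : ∀ t : ℝ, 0 < t → t ^ (-(1/2) : ℝ) = 1 / Real.sqrt t := by
        intro t ht
        rw [Real.rpow_neg ht.le, Real.sqrt_eq_rpow, one_div, one_div]
      have hmain : 1 / Real.sqrt |y - k| ≤ ‖(y - k) ^ (-(1/2) : ℝ)‖ + ‖(k - y) ^ (-(1/2) : ℝ)‖ := by
        rcases lt_trichotomy y k with h | h | h
        · rw [hkey (k - y) (by linarith), abs_of_neg (by linarith), neg_sub,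
            Real.norm_of_nonneg (by positivity : 0 ≤ 1 / Real.sqrt (k - y))]
          linarith [norm_nonneg ((y - k) ^ (-(1/2) : ℝ))]
        · subst h
          rw [sub_self, abs_zero, Real.sqrt_zero, div_zero]
          positivity
        · rw [hkey (y - k) (by linarith), abs_of_pos (by linarith),
            Real.norm_of_nonneg (by positivity : 0 ≤ 1 / Real.sqrt (y - k))]
          linarith [norm_nonneg ((k - y) ^ (-(1/2) : ℝ))]
      have hfac : |y ^ 2 - k ^ 2| = (y + k) * |y - k| := by
        have : y ^ 2 - k ^ 2 = (y + k) * (y - k) := by ring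
        rw [this, abs_mul, abs_of_pos (by linarith [hy.1])]
      rw [hfac, Real.sqrt_mul (by linarith [hy.1])]
      calc y * (1 / (Real.sqrt (y + k) * Real.sqrt |y - k|))
          = y / Real.sqrt (y + k) * (1 / Real.sqrt |y - k|) := by
            rw [one_div, mul_inv, one_div, div_eq_mul_inv, mul_assoc]
        _ ≤ (2 * k / Real.sqrt k) * (1 / Real.sqrt |y - k|) := by
            gcongr
            · exact hy.2.le
            · linarith [hy.1]
        _ ≤ _ := by
            apply mul_le_mul_of_nonneg_left hmain (by positivity)
  exact (integrableOn_fun_norm_addHaar (volume : Measure R2)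
    (f := fun y : ℝ => 1 / Real.sqrt |y ^ 2 - k ^ 2|)).2 key

lemma aux_alg (F1 F2 : R2 → ℂ) (ξ : R2) :
    ‖dotFt F1 F2 ξ‖ ^ 2 + ‖curlFt F1 F2 ξ‖ ^ 2 = ‖ξ‖ ^ 2 * (‖F1 ξ‖ ^ 2 + ‖F2 ξ‖ ^ 2) := by
  rw [EuclideanSpace.norm_sq_eq, Fin.sum_univ_two]
  simp only [dotFt, curlFt, ← Complex.normSq_eq_norm_sq, Complex.normSq_apply, Real.norm_eq_abs,
    sq_abs]
  simp
  ring

lemma aux_form (k : ℝ) (F1 F2 : R2 → ℂ) (ξ : R2) :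
    Bintegrand k F1 F2 F1 F2 ξ = g0hat k ξ *
      ((((‖ξ‖ ^ 2 - k ^ 2) * ‖dotFt F1 F2 ξ‖ ^ 2 - k ^ 2 * ‖curlFt F1 F2 ξ‖ ^ 2) /
        ‖ξ‖ ^ 2 : ℝ) : ℂ) := by
  unfold Bintegrand
  rw [Complex.mul_conj, Complex.mul_conj, Complex.normSq_eq_norm_sq, Complex.normSq_eq_norm_sq]
  push_cast
  ring

lemma aux_im (k : ℝ) (hk : 0 < k) (F1 F2 : R2 → ℂ) (ξ : R2) :
    (Bintegrand k F1 F2 F1 F2 ξ).im = -({ξ : R2 | ‖ξ‖ < k}.indicator (fun ξ =>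
      (Real.sqrt (k ^ 2 - ‖ξ‖ ^ 2) * (‖dotFt F1 F2 ξ‖ ^ 2 / ‖ξ‖ ^ 2) +
          k ^ 2 / Real.sqrt (k ^ 2 - ‖ξ‖ ^ 2) * (‖curlFt F1 F2 ξ‖ ^ 2 / ‖ξ‖ ^ 2))) ξ) := by
  rw [aux_form, g0hat]
  by_cases h : ‖ξ‖ < k
  · rw [if_pos h, Set.indicator_of_mem (by exact h), mul_comm, Complex.im_ofReal_mul]
    have hp : 0 < k ^ 2 - ‖ξ‖ ^ 2 := by nlinarith [norm_nonneg ξ]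
    have hs : 0 < Real.sqrt (k ^ 2 - ‖ξ‖ ^ 2) := Real.sqrt_pos.2 hp
    have hss := Real.sq_sqrt hp.le
    have hd : (Complex.I / ((Real.sqrt (k ^ 2 - ‖ξ‖ ^ 2) : ℝ) : ℂ)).im
        = 1 / Real.sqrt (k ^ 2 - ‖ξ‖ ^ 2) := by
      rw [Complex.div_ofReal_im, Complex.I_im]
    rw [hd]
    have : ‖ξ‖ ^ 2 - k ^ 2 = - Real.sqrt (k ^ 2 - ‖ξ‖ ^ 2) ^ 2 := by rw [hss]; ring
    rw [this]
    generalize Real.sqrt (k ^ 2 - ‖ξ‖ ^ 2) = s at *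
    field_simp
    ring
  · rw [if_neg h, Set.indicator_of_notMem (by exact h), ← Complex.ofReal_one, ← Complex.ofReal_div,
      ← Complex.ofReal_mul, Complex.ofReal_im, neg_zero]

lemma aux_norm (k : ℝ) (hk : 0 < k) (F1 F2 : R2 → ℂ) (ξ : R2) :
    ‖Bintegrand k F1 F2 F1 F2 ξ‖ ≤
      Real.sqrt |‖ξ‖ ^ 2 - k ^ 2| * (‖dotFt F1 F2 ξ‖ ^ 2 / ‖ξ‖ ^ 2) +
      k ^ 2 * (1 / Real.sqrt |‖ξ‖ ^ 2 - k ^ 2|) * (‖curlFt F1 F2 ξ‖ ^ 2 / ‖ξ‖ ^ 2) := by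
  have hg : ‖g0hat k ξ‖ = 1 / Real.sqrt |‖ξ‖ ^ 2 - k ^ 2| := by
    rw [g0hat]
    split_ifs with h
    · rw [norm_div, Complex.norm_I, Complex.norm_real, Real.norm_of_nonneg (Real.sqrt_nonneg _),
        abs_of_neg (by nlinarith [norm_nonneg ξ]), neg_sub]
    · rw [norm_div, norm_one, Complex.norm_real, Real.norm_of_nonneg (Real.sqrt_nonneg _),
        abs_of_nonneg (by nlinarith [norm_nonneg ξ])]
  rw [aux_form, norm_mul, hg, Complex.norm_real, Real.norm_eq_abs, abs_div,
    abs_of_nonneg (sq_nonneg ‖ξ‖)]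
  have h1 : |(‖ξ‖ ^ 2 - k ^ 2) * ‖dotFt F1 F2 ξ‖ ^ 2 - k ^ 2 * ‖curlFt F1 F2 ξ‖ ^ 2| ≤
      |‖ξ‖ ^ 2 - k ^ 2| * ‖dotFt F1 F2 ξ‖ ^ 2 + k ^ 2 * ‖curlFt F1 F2 ξ‖ ^ 2 := by
    refine (abs_sub _ _).trans (le_of_eq ?_)
    rw [abs_mul, abs_of_nonneg (sq_nonneg ‖dotFt F1 F2 ξ‖),
      abs_of_nonneg (by positivity : 0 ≤ k ^ 2 * ‖curlFt F1 F2 ξ‖ ^ 2)]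
  have hs := Real.sq_sqrt (abs_nonneg (‖ξ‖ ^ 2 - k ^ 2))
  have hs0 := Real.sqrt_nonneg |‖ξ‖ ^ 2 - k ^ 2|
  calc _ ≤ 1 / Real.sqrt |‖ξ‖ ^ 2 - k ^ 2| *
        ((|‖ξ‖ ^ 2 - k ^ 2| * ‖dotFt F1 F2 ξ‖ ^ 2 + k ^ 2 * ‖curlFt F1 F2 ξ‖ ^ 2) / ‖ξ‖ ^ 2) := by
        gcongr
    _ = _ := by
        have hq : 1 / Real.sqrt |‖ξ‖ ^ 2 - k ^ 2| * |‖ξ‖ ^ 2 - k ^ 2|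
            = Real.sqrt |‖ξ‖ ^ 2 - k ^ 2| := by
          rw [one_div_mul_eq_div, Real.div_sqrt]
        rw [add_div, mul_add, mul_div_assoc, ← mul_assoc, hq]
        ring

lemma aux_bound (k : ℝ) (hk : 0 < k) (F1 F2 : R2 → ℂ) (M : ℝ)
    (hM : ∀ ξ : R2, ‖ξ‖ < 2 * k → ‖F1 ξ‖ ^ 2 + ‖F2 ξ‖ ^ 2 ≤ M) (ξ : R2) :
    ‖Bintegrand k F1 F2 F1 F2 ξ‖ ≤
      (k * (1 + k) + (1 + 1 / k) + k ^ 2 * (2 * (1 + 1 / k))) *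
        (((1 : ℝ) + ‖ξ‖ ^ 2) ^ (-(1/2) : ℝ) * ‖dotFt F1 F2 ξ‖ ^ 2 +
        (((1 : ℝ) + ‖ξ‖ ^ 2) ^ (-(1/2) : ℝ) * ‖F1 ξ‖ ^ 2 +
        ((1 : ℝ) + ‖ξ‖ ^ 2) ^ (-(1/2) : ℝ) * ‖F2 ξ‖ ^ 2)) +
      k ^ 2 * M * (Metric.ball (0 : R2) (2 * k)).indicator
        (fun ξ : R2 => 1 / Real.sqrt |‖ξ‖ ^ 2 - k ^ 2|) ξ := by
  refine (aux_norm k hk F1 F2 ξ).trans ?_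
  have halg := aux_alg F1 F2 ξ
  have hr0 := norm_nonneg ξ
  have hD : 0 ≤ ‖dotFt F1 F2 ξ‖ ^ 2 := by positivity
  have hC : 0 ≤ ‖curlFt F1 F2 ξ‖ ^ 2 := by positivity
  have hPe : ‖F1 ξ‖ ^ 2 + ‖F2 ξ‖ ^ 2 = ‖F1 ξ‖ ^ 2 + ‖F2 ξ‖ ^ 2 := rfl
  have hP : 0 ≤ ‖F1 ξ‖ ^ 2 + ‖F2 ξ‖ ^ 2 := by positivity
  have hMξ := hM ξ
  have hM0 : 0 ≤ M := le_trans (by positivity) (hM 0 (by simpa using hk))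
  rw [← mul_add (((1 : ℝ) + ‖ξ‖ ^ 2) ^ (-(1/2) : ℝ)) (‖F1 ξ‖ ^ 2)]
  have hwdef : ((1 : ℝ) + ‖ξ‖ ^ 2) ^ (-(1/2) : ℝ) = 1 / Real.sqrt (1 + ‖ξ‖ ^ 2) := by
    rw [Real.rpow_neg (by positivity), Real.sqrt_eq_rpow, one_div, one_div]
  have hind : ((Metric.ball (0 : R2) (2 * k)).indicator
        (fun ξ : R2 => 1 / Real.sqrt |‖ξ‖ ^ 2 - k ^ 2|) ξ) =
      if ‖ξ‖ < 2 * k then 1 / Real.sqrt |‖ξ‖ ^ 2 - k ^ 2| else 0 := by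
    by_cases h : ‖ξ‖ < 2 * k
    · rw [Set.indicator_of_mem (by simpa using h), if_pos h]
    · rw [Set.indicator_of_notMem (by simpa using h), if_neg h]
  rw [hind, hwdef]
  have hq1 : Real.sqrt (1 + ‖ξ‖ ^ 2) ≤ 1 + ‖ξ‖ := by
    rw [Real.sqrt_le_left (by positivity)]; nlinarith
  have hq0 : 0 < Real.sqrt (1 + ‖ξ‖ ^ 2) := by positivity
  clear hind hwdef hM hPe
  generalize ‖F1 ξ‖ ^ 2 + ‖F2 ξ‖ ^ 2 = P at *
  generalize ‖dotFt F1 F2 ξ‖ ^ 2 = D at *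
  generalize ‖curlFt F1 F2 ξ‖ ^ 2 = C at *
  generalize Real.sqrt (1 + ‖ξ‖ ^ 2) = q at *
  generalize ‖ξ‖ = r at *
  have hDP : D / r ^ 2 ≤ P := div_le_of_le_mul₀ (by positivity) hP (by linarith)
  have hCP : C / r ^ 2 ≤ P := div_le_of_le_mul₀ (by positivity) hP (by linarith)
  have t0 : 0 ≤ 1 / q * D := by positivity
  have t0' : 0 ≤ 1 / q * P := by positivity
  have hrk : k ≤ r → 1 / r ≤ (1 + 1 / k) * (1 / q) := by
    intro h
    have hr : 0 < r := by linarith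
    have h1 : q / r ≤ 1 + 1 / k := by
      calc q / r ≤ (1 + r) / r := by gcongr
        _ = 1 + 1 / r := by field_simp; ring
        _ ≤ 1 + 1 / k := by gcongr
    calc 1 / r = q / r * (1 / q) := by field_simp
      _ ≤ _ := by gcongr
  have T1 : Real.sqrt |r ^ 2 - k ^ 2| * (D / r ^ 2) ≤
      k * (1 + k) * (1 / q * P) + (1 + 1 / k) * (1 / q * D) := by
    rcases lt_or_ge r k with h | h
    · have hs : Real.sqrt |r ^ 2 - k ^ 2| ≤ k := by
        rw [Real.sqrt_le_left hk.le, abs_of_neg (by nlinarith)]; nlinarith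
      have h1 : Real.sqrt |r ^ 2 - k ^ 2| * (D / r ^ 2) ≤ k * P := by gcongr
      have h2 : k * P ≤ k * (1 + k) * (1 / q * P) := by
        calc k * P = k * q * (1 / q * P) := by field_simp
          _ ≤ _ := by gcongr; linarith
      have h3 : 0 ≤ (1 + 1 / k) * (1 / q * D) := by positivity
      linarith
    · have hr : 0 < r := by linarith
      have hs : Real.sqrt |r ^ 2 - k ^ 2| ≤ r := by
        rw [Real.sqrt_le_left hr.le, abs_of_nonneg (by nlinarith)]; nlinarith
      have h1 : Real.sqrt |r ^ 2 - k ^ 2| * (D / r ^ 2) ≤ (1 + 1 / k) * (1 / q * D) := by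
        calc _ ≤ r * (D / r ^ 2) := by gcongr
          _ = 1 / r * D := by field_simp
          _ ≤ (1 + 1 / k) * (1 / q) * D := by gcongr; exact hrk h
          _ = _ := by ring
      have h3 : 0 ≤ k * (1 + k) * (1 / q * P) := by positivity
      linarith
  have T2 : k ^ 2 * (1 / Real.sqrt |r ^ 2 - k ^ 2|) * (C / r ^ 2) ≤
      k ^ 2 * (2 * (1 + 1 / k)) * (1 / q * P) +
      k ^ 2 * M * (if r < 2 * k then 1 / Real.sqrt |r ^ 2 - k ^ 2| else 0) := by
    split_ifs with h
    · have h1 : k ^ 2 * (1 / Real.sqrt |r ^ 2 - k ^ 2|) * (C / r ^ 2) ≤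
          k ^ 2 * (1 / Real.sqrt |r ^ 2 - k ^ 2|) * M := by
        gcongr; exact hCP.trans (hMξ h)
      have h3 : 0 ≤ k ^ 2 * (2 * (1 + 1 / k)) * (1 / q * P) := by positivity
      linarith
    · push Not at h
      have hr : 0 < r := by linarith
      have hs : r / 2 ≤ Real.sqrt |r ^ 2 - k ^ 2| := by
        apply Real.le_sqrt_of_sq_le
        rw [abs_of_nonneg (by nlinarith)]; nlinarith
      have h1 : 1 / Real.sqrt |r ^ 2 - k ^ 2| ≤ 2 * (1 + 1 / k) * (1 / q) := by
        calc _ ≤ 1 / (r / 2) := by gcongr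
          _ = 2 * (1 / r) := by field_simp
          _ ≤ 2 * ((1 + 1 / k) * (1 / q)) := by gcongr; exact hrk (by linarith)
          _ = _ := by ring
      calc _ ≤ k ^ 2 * (2 * (1 + 1 / k) * (1 / q)) * P := by gcongr
        _ = _ := by ring
  have u1 : 0 ≤ k * (1 + k) * (1 / q * D) := by positivity
  have u2 : 0 ≤ (1 + 1 / k) * (1 / q * P) := by positivity
  have u3 : 0 ≤ k ^ 2 * (2 * (1 + 1 / k)) * (1 / q * D) := by positivity
  linarith

lemma aux_integrable (Γ : Set R2) (k : ℝ) (hk : 0 < k) (W : Xelt Γ) :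
    Integrable (Bintegrand k W.c1.ft W.c2.ft W.c1.ft W.c2.ft) := by
  have c1 := W.c1.cont
  have c2 := W.c2.cont
  obtain ⟨M, hM⟩ := (isCompact_closedBall (0 : R2) (2 * k)).exists_bound_of_continuousOn
    (f := fun ξ : R2 => ‖W.c1.ft ξ‖ ^ 2 + ‖W.c2.ft ξ‖ ^ 2) (by fun_prop)
  have hM' : ∀ ξ : R2, ‖ξ‖ < 2 * k → ‖W.c1.ft ξ‖ ^ 2 + ‖W.c2.ft ξ‖ ^ 2 ≤ M := fun ξ hξ =>
    (le_abs_self _).trans (hM ξ (by simpa using hξ.le))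
  refine Integrable.mono' (((W.divMem.add (W.c1.mem.add W.c2.mem)).const_mul
    (k * (1 + k) + (1 + 1 / k) + k ^ 2 * (2 * (1 + 1 / k)))).add
    (((aux_sing k hk).integrable_indicator measurableSet_ball).const_mul (k ^ 2 * M))) ?_
    (Eventually.of_forall fun ξ => aux_bound k hk _ _ M hM' ξ)
  have hg : Measurable (g0hat k) := by
    unfold g0hat
    refine Measurable.ite (measurableSet_lt measurable_norm measurable_const) ?_ ?_ <;> fun_prop
  have m1 := c1.measurable
  have m2 := c2.measurable
  have hd : Measurable (dotFt W.c1.ft W.c2.ft) := by unfold dotFt; fun_prop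
  have hc : Measurable (curlFt W.c1.ft W.c2.ft) := by unfold curlFt; fun_prop
  apply Measurable.aestronglyMeasurable
  have : Bintegrand k W.c1.ft W.c2.ft W.c1.ft W.c2.ft = _ := funext (aux_form k _ _)
  rw [this]
  fun_prop

/-- for every `W ∈ X`,
`Im B(W,W) = -∫_{|ξ|<k} ( √(k²-|ξ|²)|a₁(ξ)|² + (k²/√(k²-|ξ|²))|a₂(ξ)|² ) dξ`,
with `a₁ = ξ·Ŵ/|ξ|` and `a₂ = ξ⊥·Ŵ/|ξ|`; consequently, if `Im B(W,W) = 0` then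
`Ŵ(ξ) = 0` for every `ξ` with `|ξ| < k`. -/
theorem statement9 (Γ : Set R2) (hΓ : IsLipschitzDomain Γ) (k : ℝ) (hk : 0 < k)
    (W : Xelt Γ) :
    (Bform k W W).im =
      -∫ ξ in {ξ : R2 | ‖ξ‖ < k},
        (Real.sqrt (k ^ 2 - ‖ξ‖ ^ 2) * (‖dotFt W.c1.ft W.c2.ft ξ‖ ^ 2 / ‖ξ‖ ^ 2) +
          k ^ 2 / Real.sqrt (k ^ 2 - ‖ξ‖ ^ 2) * (‖curlFt W.c1.ft W.c2.ft ξ‖ ^ 2 / ‖ξ‖ ^ 2)) ∧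
    ((Bform k W W).im = 0 →
      ∀ ξ : R2, ‖ξ‖ < k → W.c1.ft ξ = 0 ∧ W.c2.ft ξ = 0) := by
  have hI := aux_integrable Γ k hk W
  have hms : MeasurableSet {ξ : R2 | ‖ξ‖ < k} :=
    measurableSet_lt measurable_norm measurable_const
  have hopen : IsOpen {ξ : R2 | ‖ξ‖ < k} := isOpen_lt continuous_norm continuous_const
  have h1 : (Bform k W W).im =
      -∫ ξ in {ξ : R2 | ‖ξ‖ < k},
        (Real.sqrt (k ^ 2 - ‖ξ‖ ^ 2) * (‖dotFt W.c1.ft W.c2.ft ξ‖ ^ 2 / ‖ξ‖ ^ 2) +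
          k ^ 2 / Real.sqrt (k ^ 2 - ‖ξ‖ ^ 2) *
            (‖curlFt W.c1.ft W.c2.ft ξ‖ ^ 2 / ‖ξ‖ ^ 2)) := by
    rw [← integral_indicator hms, ← integral_neg]
    refine (integral_im hI).symm.trans ?_
    exact integral_congr_ae (Eventually.of_forall fun ξ => aux_im k hk _ _ ξ)
  refine ⟨h1, fun h0 => ?_⟩
  have hint : IntegrableOn (fun ξ : R2 =>
      Real.sqrt (k ^ 2 - ‖ξ‖ ^ 2) * (‖dotFt W.c1.ft W.c2.ft ξ‖ ^ 2 / ‖ξ‖ ^ 2) +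
          k ^ 2 / Real.sqrt (k ^ 2 - ‖ξ‖ ^ 2) *
            (‖curlFt W.c1.ft W.c2.ft ξ‖ ^ 2 / ‖ξ‖ ^ 2)) {ξ : R2 | ‖ξ‖ < k} := by
    rw [← integrable_indicator_iff hms]
    refine hI.im.neg.congr (Eventually.of_forall fun ξ => ?_)
    have := aux_im k hk W.c1.ft W.c2.ft ξ
    change -(Bintegrand k W.c1.ft W.c2.ft W.c1.ft W.c2.ft ξ).im = _
    rw [this, neg_neg]
  rw [h1, neg_eq_zero, setIntegral_eq_zero_iff_of_nonneg_ae
    (Eventually.of_forall fun ξ => by simp only [Pi.zero_apply]; positivity) hint] at h0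
  have hne : ∀ᵐ ξ ∂((volume : Measure R2).restrict {ξ : R2 | ‖ξ‖ < k}), ξ ≠ 0 := by
    apply ae_restrict_of_ae
    simp [ae_iff]
  have hmem : ∀ᵐ ξ ∂((volume : Measure R2).restrict {ξ : R2 | ‖ξ‖ < k}), ‖ξ‖ < k :=
    ae_restrict_mem hms
  have hP : (fun ξ => ‖W.c1.ft ξ‖ ^ 2 + ‖W.c2.ft ξ‖ ^ 2)
      =ᵐ[(volume : Measure R2).restrict {ξ : R2 | ‖ξ‖ < k}] fun _ => 0 := by
    filter_upwards [h0, hne, hmem] with ξ e1 e2 e3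
    have hr : 0 < ‖ξ‖ := norm_pos_iff.2 e2
    have hp : 0 < k ^ 2 - ‖ξ‖ ^ 2 := by nlinarith
    have hs : 0 < Real.sqrt (k ^ 2 - ‖ξ‖ ^ 2) := Real.sqrt_pos.2 hp
    simp only [Pi.zero_apply] at e1
    rw [add_eq_zero_iff_of_nonneg (by positivity) (by positivity)] at e1
    obtain ⟨ed, ec⟩ := e1
    have ed' : ‖dotFt W.c1.ft W.c2.ft ξ‖ ^ 2 = 0 := by
      rcases mul_eq_zero.1 ed with h | h
      · exact absurd h hs.ne'
      · exact (div_eq_zero_iff.1 h).resolve_right (by positivity)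
    have ec' : ‖curlFt W.c1.ft W.c2.ft ξ‖ ^ 2 = 0 := by
      rcases mul_eq_zero.1 ec with h | h
      · exact absurd h (by positivity)
      · exact (div_eq_zero_iff.1 h).resolve_right (by positivity)
    have := aux_alg W.c1.ft W.c2.ft ξ
    rw [ed', ec', add_zero] at this
    exact (mul_eq_zero.1 this.symm).resolve_left (by positivity)
  have c1 := W.c1.cont
  have c2 := W.c2.cont
  have hE := Measure.eqOn_open_of_ae_eq hP hopen (by fun_prop) (by fun_prop)
  intro ξ hξ
  have h := hE hξ
  simp only at h
  rw [add_eq_zero_iff_of_nonneg (by positivity) (by positivity)] at h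
  simpa using h

end
end
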